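/- arXiv:2008.13179 — 4 statements merged into one kernel-verified Lean document; each statement's English description precedes it below -/
import Mathlib

section
/- Under the Setup, suppose additionally: Π is C³, F and A are C², K is C¹ on O; (C): (∂₁Π)² + (∂₃Π)² ≠ 0 everywhere on O; O = O₁ ∪ O₂ where O₁, O₂ are open, Ω is constant on O₁, and ρ = P = 0 on O₂; P is C¹ on O₁; and on O₁ the Euler relation ∂ⱼP = (ε+P)·(1/(2E))·(−∂ⱼf + 2(Ω/c)∂ⱼk + (Ω²/c²)∂ⱼl) holds for j = 1,3. Assume F, A, Π satisfy (N.9a), (N.9b), (N.9c) on O. Define D := (∂₁Π)² + (∂₃Π)², K̃₁ := D⁻¹·(∂₁Π·RH(Ya) + ∂₃Π·RH(Yb)) and K̃₃ := D⁻¹·(−∂₃Π·RH(Ya) + ∂₁Π·RH(Yb)), where RH(Ya) and RH(Yb) denote the right-hand sides of equations (Ya) and (Yb). Then on O the following identity holds: ∂₃K̃₁ − ∂₁K̃₃ = 2κ·e^{2(−F+K)}·P·Π·D⁻¹·[(∂₁K − K̃₁)·∂₃Π − (∂₃K − K̃₃)·∂₁Π]. -/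
open Real

/-- Partial derivative in the first coordinate `ϖ`. -/
noncomputable def d1 (f : ℝ × ℝ → ℝ) : ℝ × ℝ → ℝ := fun p => fderiv ℝ f p (1, 0)

/-- Partial derivative in the second coordinate `z`. -/
noncomputable def d3 (f : ℝ × ℝ → ℝ) : ℝ × ℝ → ℝ := fun p => fderiv ℝ f p (0, 1)

/-!
The right-hand sides of (Ya) and (Yb) are the trace-free part of one symmetric tensor,
`T(u, w) = ∂ᵤ∂_wΠ + 2Π ∂ᵤF ∂_wF - e^{4F}/(2Π) ∂ᵤA ∂_wA`, whose divergence is a combination of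
`∂(ΔΠ)` and the left-hand sides of (N.9a) and (N.9b), up to a multiple of `∇Π`. Since (Ya) and
(Yb) form a system of Cauchy–Riemann type for `K`, taking the wedge of this divergence with `∇Π`
produces `D (∂₃K̃₁ - ∂₁K̃₃)`, together with a term coming from `ΔΠ`. The multiple of `∇Π` drops out
of the wedge, and the Euler relation cancels all matter terms except `2κ e^{2(-F+K)} P Π ∇Π ∧ ∇K`.
-/

/-- The derivative of `f` in the constant direction `v`, as a function of the base point;
`d1` and `d3` are the cases `v = (1, 0)` and `v = (0, 1)`. -/
noncomputable def dirDeriv {V : Type*} [NormedAddCommGroup V] [NormedSpace ℝ V]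
    (v : V) (f : V → ℝ) : V → ℝ := fun p => fderiv ℝ f p v

local notation:max "∂[" v "]" => dirDeriv v

section DirectionalDerivatives

variable {V : Type*} [NormedAddCommGroup V] [NormedSpace ℝ V]

variable {f g : V → ℝ} {p : V}

lemma dirDeriv_const (v : V) (a : ℝ) : ∂[v] (fun _ => a) p = 0 := by
  simp [dirDeriv]

lemma dirDeriv_congr (v : V) (h : f =ᶠ[nhds p] g) : ∂[v] f p = ∂[v] g p := by
  rw [dirDeriv, dirDeriv, h.fderiv_eq]

lemma dirDeriv_neg (v : V) : ∂[v] (fun q => -f q) p = -∂[v] f p := by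
  simp [dirDeriv, fderiv_fun_neg]

lemma dirDeriv_add (v : V) (hf : DifferentiableAt ℝ f p) (hg : DifferentiableAt ℝ g p) :
    ∂[v] (fun q => f q + g q) p = ∂[v] f p + ∂[v] g p := by
  simp [dirDeriv, fderiv_fun_add hf hg]

lemma dirDeriv_sub (v : V) (hf : DifferentiableAt ℝ f p) (hg : DifferentiableAt ℝ g p) :
    ∂[v] (fun q => f q - g q) p = ∂[v] f p - ∂[v] g p := by
  simp [dirDeriv, fderiv_fun_sub hf hg]

lemma dirDeriv_mul (v : V) (hf : DifferentiableAt ℝ f p) (hg : DifferentiableAt ℝ g p) :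
    ∂[v] (fun q => f q * g q) p = ∂[v] f p * g p + f p * ∂[v] g p := by
  simp [dirDeriv, fderiv_fun_mul hf hg, mul_comm, add_comm]

lemma dirDeriv_sq (v : V) (hf : DifferentiableAt ℝ f p) :
    ∂[v] (fun q => f q ^ 2) p = 2 * f p * ∂[v] f p := by
  simp only [sq, dirDeriv_mul v hf hf]
  ring

lemma dirDeriv_inv (v : V) (hf : DifferentiableAt ℝ f p) (h0 : f p ≠ 0) :
    ∂[v] (fun q => (f q)⁻¹) p = -∂[v] f p / f p ^ 2 := by
  have := ((hasDerivAt_inv h0).comp_hasFDerivAt p hf.hasFDerivAt).fderiv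
  simp only [Function.comp_def] at this
  simp [dirDeriv, this, div_eq_inv_mul]

lemma dirDeriv_exp (v : V) (hf : DifferentiableAt ℝ f p) :
    ∂[v] (fun q => exp (f q)) p = exp (f p) * ∂[v] f p := by
  simp [dirDeriv, fderiv_exp hf]

lemma contDiffAt_dirDeriv (v : V) {m n : WithTop ℕ∞} (hf : ContDiffAt ℝ n f p)
    (hmn : m + 1 ≤ n) : ContDiffAt ℝ m (∂[v] f) p :=
  (hf.fderiv_right hmn).clm_apply contDiffAt_const

lemma differentiableAt_dirDeriv (v : V) (hf : ContDiffAt ℝ 2 f p) :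
    DifferentiableAt ℝ (∂[v] f) p :=
  (contDiffAt_dirDeriv v hf (m := 1) (by norm_num)).differentiableAt one_ne_zero

lemma dirDeriv_comm (u w : V) (hf : ContDiffAt ℝ 2 f p) :
    ∂[u] (∂[w] f) p = ∂[w] (∂[u] f) p := by
  have hdf : DifferentiableAt ℝ (fderiv ℝ f) p :=
    (hf.fderiv_right (m := 1) (by norm_num)).differentiableAt one_ne_zero
  have dirDeriv_dirDeriv (v v' : V) : ∂[v] (∂[v'] f) p = fderiv ℝ (fderiv ℝ f) p v v' := by
    rw [dirDeriv, show ∂[v'] f = fun q => fderiv ℝ f q v' from rfl,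
      fderiv_clm_apply hdf (differentiableAt_const v')]
    simp
  rw [dirDeriv_dirDeriv, dirDeriv_dirDeriv]
  exact hf.isSymmSndFDerivAt (by simp) u w

/-- The Laplacian built from the two directions `u` and `w`. -/
noncomputable def planarLaplacian (u w : V) (f : V → ℝ) : V → ℝ :=
  fun p => ∂[u] (∂[u] f) p + ∂[w] (∂[w] f) p

/-- The squared gradient norm built from the two directions `u` and `w`. -/
noncomputable def gradSq (u w : V) (f : V → ℝ) : V → ℝ :=
  fun p => (∂[u] f p) ^ 2 + (∂[w] f p) ^ 2

/-- The component of `∇f ∧ ∇g` along `w ∧ u`, the order that matches the sign of the curl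
`∂₃K̃₁ - ∂₁K̃₃`. -/
noncomputable def gradWedge (u w : V) (f g : V → ℝ) : V → ℝ :=
  fun p => ∂[w] f p * ∂[u] g p - ∂[u] f p * ∂[w] g p

lemma planarLaplacian_swap (u w : V) : planarLaplacian w u f = planarLaplacian u w f :=
  funext fun _ => add_comm _ _

lemma gradSq_mul_curl_of_cauchyRiemann {u w : V} {a b X Y : V → ℝ} (hf : ContDiffAt ℝ 2 f p)
    (hX : DifferentiableAt ℝ X p) (hY : DifferentiableAt ℝ Y p)
    (ha : a =ᶠ[nhds p] fun q => ∂[u] f q * X q - ∂[w] f q * Y q)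
    (hb : b =ᶠ[nhds p] fun q => ∂[w] f q * X q + ∂[u] f q * Y q) :
    gradSq u w f p * (∂[w] X p - ∂[u] Y p)
      = ∂[w] f p * (∂[u] a p + ∂[w] b p) - ∂[u] f p * (∂[u] b p - ∂[w] a p)
        - planarLaplacian u w f p * (∂[w] f p * X p - ∂[u] f p * Y p) := by
  have hfu := differentiableAt_dirDeriv u hf
  have hfw := differentiableAt_dirDeriv w hf
  simp (disch := fun_prop) only [dirDeriv_congr _ ha, dirDeriv_congr _ hb, dirDeriv_add,
    dirDeriv_sub, dirDeriv_mul, dirDeriv_comm w u hf, gradSq, planarLaplacian]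
  ring

end DirectionalDerivatives

section ReducedEquations

variable {V : Type*} [NormedAddCommGroup V] [NormedSpace ℝ V]

/-- The left-hand side of (N.9a); `Q` stands for `Π`, and `u`, `w` for the directions of `∂₁`,
`∂₃`, here and in what follows. -/
noncomputable def fieldOpF (u w : V) (F A Q : V → ℝ) : V → ℝ := fun p =>
  ∂[u] (∂[u] F) p + ∂[w] (∂[w] F) p
    + (1 / Q p) * (∂[u] Q p * ∂[u] F p + ∂[w] Q p * ∂[w] F p)
    + (exp (4 * F p) / (2 * (Q p) ^ 2)) * ((∂[u] A p) ^ 2 + (∂[w] A p) ^ 2)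

/-- The left-hand side of (N.9b). -/
noncomputable def fieldOpA (u w : V) (F A Q : V → ℝ) : V → ℝ := fun p =>
  ∂[u] (∂[u] A) p + ∂[w] (∂[w] A) p
    - (1 / Q p) * (∂[u] Q p * ∂[u] A p + ∂[w] Q p * ∂[w] A p)
    + 4 * (∂[u] F p * ∂[u] A p + ∂[w] F p * ∂[w] A p)

/-- The symmetric tensor whose `(u, w)` component is the right-hand side of (Yb) and the halved
difference of whose diagonal components is the right-hand side of (Ya). -/
noncomputable def quadratureTensor (F A Q : V → ℝ) (u w : V) : V → ℝ := fun p =>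
  ∂[u] (∂[w] Q) p + 2 * Q p * ∂[u] F p * ∂[w] F p
    - (exp (4 * F p) / (2 * Q p)) * (∂[u] A p * ∂[w] A p)

/-- The right-hand side of (Ya). -/
noncomputable def quadratureDiff (F A Q : V → ℝ) (u w : V) : V → ℝ := fun p =>
  (1 / 2) * (∂[u] (∂[u] Q) p - ∂[w] (∂[w] Q) p)
    + Q p * ((∂[u] F p) ^ 2 - (∂[w] F p) ^ 2)
    - (exp (4 * F p) / (4 * Q p)) * ((∂[u] A p) ^ 2 - (∂[w] A p) ^ 2)

/-- The value `K̃₁` of `∂ᵤK` obtained by solving (Ya) and (Yb). -/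
noncomputable def quadratureGradU (F A Q : V → ℝ) (u w : V) : V → ℝ := fun p =>
  (gradSq u w Q p)⁻¹ *
    (∂[u] Q p * quadratureDiff F A Q u w p + ∂[w] Q p * quadratureTensor F A Q u w p)

/-- The value `K̃₃` of `∂_wK` obtained by solving (Ya) and (Yb). -/
noncomputable def quadratureGradW (F A Q : V → ℝ) (u w : V) : V → ℝ := fun p =>
  (gradSq u w Q p)⁻¹ *
    (-(∂[w] Q p) * quadratureDiff F A Q u w p + ∂[u] Q p * quadratureTensor F A Q u w p)

/-- The divergence of the trace-free part of `quadratureTensor`, contracted with `u`. -/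
noncomputable def quadratureDiv (F A Q : V → ℝ) (u w : V) : V → ℝ := fun p =>
  ∂[u] (quadratureDiff F A Q u w) p + ∂[w] (quadratureTensor F A Q u w) p

/-- The quantity `E = e^{2F}(1 + ωA)² - e^{-2F}ω²Q²`, where `ω` stands for `Ω/c`. -/
noncomputable def fluidNorm (F A Q ω : V → ℝ) : V → ℝ := fun p =>
  exp (2 * F p) * (1 + ω p * A p) ^ 2 - exp (-(2 * F p)) * ω p ^ 2 * (Q p) ^ 2

/-- The sum `e^{2F}(1 + ωA)² + e^{-2F}ω²Q²` in the source of (N.9a), where `ω` stands for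
`Ω/c`. -/
noncomputable def fluidSum (F A Q ω : V → ℝ) : V → ℝ := fun p =>
  exp (2 * F p) * (1 + ω p * A p) ^ 2 + exp (-(2 * F p)) * ω p ^ 2 * (Q p) ^ 2

/-- The Euler relation in the direction `v` at `p`, where `ω` stands for `Ω/c` and the
differentiated functions are `f`, `k` and `l`. -/
def EulerRelationAt (F A Q P ε ω : V → ℝ) (v p : V) : Prop :=
  ∂[v] P p = (ε p + P p) * (1 / (2 * fluidNorm F A Q ω p))
    * (-(∂[v] (fun q => exp (2 * F q)) p)
      + 2 * ω p * ∂[v] (fun q => -exp (2 * F q) * A q) p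
      + ω p ^ 2 * ∂[v] (fun q => -exp (2 * F q) * (A q) ^ 2 + exp (-(2 * F q)) * (Q q) ^ 2) p)

variable {F A Q K P ε ω : V → ℝ} {p u v w : V} {κ : ℝ}

lemma fieldOpF_swap : fieldOpF w u F A Q p = fieldOpF u w F A Q p := by
  simp only [fieldOpF]
  ring

lemma fieldOpA_swap : fieldOpA w u F A Q p = fieldOpA u w F A Q p := by
  simp only [fieldOpA]
  ring

lemma quadratureTensor_comm (hQ : ContDiffAt ℝ 2 Q p) :
    quadratureTensor F A Q u w p = quadratureTensor F A Q w u p := by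
  simp only [quadratureTensor, dirDeriv_comm u w hQ]
  ring

lemma quadratureDiff_swap :
    quadratureDiff F A Q w u = fun p => -quadratureDiff F A Q u w p := by
  funext p
  simp only [quadratureDiff]
  ring

lemma quadratureDiff_eq_half_sub :
    quadratureDiff F A Q u w = fun p =>
      (1 / 2) * (quadratureTensor F A Q u u p - quadratureTensor F A Q w w p) := by
  funext p
  simp only [quadratureDiff, quadratureTensor]
  ring

lemma quadratureGrad_solves_diff (hD : gradSq u w Q p ≠ 0) :
    quadratureDiff F A Q u w p
      = ∂[u] Q p * quadratureGradU F A Q u w p - ∂[w] Q p * quadratureGradW F A Q u w p := by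
  simp only [quadratureGradU, quadratureGradW]
  field_simp
  simp only [gradSq]
  ring

lemma quadratureGrad_solves_tensor (hD : gradSq u w Q p ≠ 0) :
    quadratureTensor F A Q u w p
      = ∂[w] Q p * quadratureGradU F A Q u w p + ∂[u] Q p * quadratureGradW F A Q u w p := by
  simp only [quadratureGradU, quadratureGradW]
  field_simp
  simp only [gradSq]
  ring

lemma dirDeriv_exp_div (hF : DifferentiableAt ℝ F p) (hQ : DifferentiableAt ℝ Q p)
    (hQ0 : Q p ≠ 0) :
    ∂[v] (fun q => exp (4 * F q) / (2 * Q q)) p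
      = exp (4 * F p) / (2 * Q p) * (4 * ∂[v] F p - ∂[v] Q p / Q p) := by
  have h2Q : 2 * Q p ≠ 0 := by positivity
  simp (disch := first | exact h2Q | fun_prop (disch := exact h2Q)) only [div_eq_mul_inv,
    dirDeriv_mul, dirDeriv_exp, dirDeriv_inv, dirDeriv_const]
  field_simp
  ring

section Regularity

variable (hF : ContDiffAt ℝ 2 F p) (hA : ContDiffAt ℝ 2 A p) (hQ : ContDiffAt ℝ 3 Q p)
  (hQ0 : Q p ≠ 0)
include hF hA hQ hQ0

lemma differentiableAt_quadratureTensor :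
    DifferentiableAt ℝ (quadratureTensor F A Q u w) p := by
  have hQuw := differentiableAt_dirDeriv u (contDiffAt_dirDeriv w hQ (m := 2) (by norm_num))
  have h2Q : 2 * Q p ≠ 0 := by positivity
  have hF' := hF.differentiableAt two_ne_zero
  have hQ' := hQ.differentiableAt three_ne_zero
  have hFu := differentiableAt_dirDeriv u hF
  have hFw := differentiableAt_dirDeriv w hF
  have hAu := differentiableAt_dirDeriv u hA
  have hAw := differentiableAt_dirDeriv w hA
  unfold quadratureTensor
  fun_prop (disch := exact h2Q)

lemma differentiableAt_quadratureDiff :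
    DifferentiableAt ℝ (quadratureDiff F A Q u w) p := by
  have hT (v : V) := differentiableAt_quadratureTensor (u := v) (w := v) hF hA hQ hQ0
  rw [quadratureDiff_eq_half_sub]
  exact ((hT u).fun_sub (hT w)).const_mul _

lemma differentiableAt_quadratureGrad (hD : gradSq u w Q p ≠ 0) :
    DifferentiableAt ℝ (quadratureGradU F A Q u w) p ∧
      DifferentiableAt ℝ (quadratureGradW F A Q u w) p := by
  have hQu := differentiableAt_dirDeriv u (hQ.of_le (by norm_num))
  have hQw := differentiableAt_dirDeriv w (hQ.of_le (by norm_num))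
  have hT : DifferentiableAt ℝ (quadratureTensor F A Q u w) p :=
    differentiableAt_quadratureTensor hF hA hQ hQ0
  have hDiff : DifferentiableAt ℝ (quadratureDiff F A Q u w) p :=
    differentiableAt_quadratureDiff hF hA hQ hQ0
  have hgrad : DifferentiableAt ℝ (gradSq u w Q) p := by
    unfold gradSq
    fun_prop
  unfold quadratureGradU quadratureGradW
  constructor <;> fun_prop (disch := exact hD)

lemma dirDeriv_quadratureTensor :
    ∂[v] (quadratureTensor F A Q u w) p
      = ∂[v] (∂[u] (∂[w] Q)) p
        + 2 * (∂[v] Q p * ∂[u] F p * ∂[w] F p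
          + Q p * (∂[v] (∂[u] F) p * ∂[w] F p + ∂[u] F p * ∂[v] (∂[w] F) p))
        - exp (4 * F p) / (2 * Q p)
          * ((4 * ∂[v] F p - ∂[v] Q p / Q p) * (∂[u] A p * ∂[w] A p)
            + ∂[v] (∂[u] A) p * ∂[w] A p + ∂[u] A p * ∂[v] (∂[w] A) p) := by
  have hQuw := differentiableAt_dirDeriv u (contDiffAt_dirDeriv w hQ (m := 2) (by norm_num))
  have h2Q : 2 * Q p ≠ 0 := by positivity
  have hF' := hF.differentiableAt two_ne_zero
  have hQ' := hQ.differentiableAt three_ne_zero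
  have hFu := differentiableAt_dirDeriv u hF
  have hFw := differentiableAt_dirDeriv w hF
  have hAu := differentiableAt_dirDeriv u hA
  have hAw := differentiableAt_dirDeriv w hA
  unfold quadratureTensor
  simp (disch := fun_prop (disch := exact h2Q)) only [dirDeriv_sub, dirDeriv_add, dirDeriv_mul,
    dirDeriv_const, dirDeriv_exp_div hF' hQ' hQ0]
  ring

lemma quadratureDiv_eq :
    quadratureDiv F A Q u w p
      = (1 / 2) * ∂[u] (planarLaplacian u w Q) p
        + 2 * Q p * fieldOpF u w F A Q p * ∂[u] F p
        - exp (4 * F p) / (2 * Q p) * fieldOpA u w F A Q p * ∂[u] A p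
        - (gradSq u w F p + exp (4 * F p) / (4 * Q p ^ 2) * gradSq u w A p) * ∂[u] Q p := by
  have hT (v v' : V) := differentiableAt_quadratureTensor (u := v) (w := v') hF hA hQ hQ0
  have hQw : ContDiffAt ℝ 2 (∂[w] Q) p := contDiffAt_dirDeriv w hQ (by norm_num)
  have hQu : ContDiffAt ℝ 2 (∂[u] Q) p := contDiffAt_dirDeriv u hQ (by norm_num)
  have hLap : ∂[u] (planarLaplacian u w Q) p
      = ∂[u] (∂[u] (∂[u] Q)) p + ∂[u] (∂[w] (∂[w] Q)) p :=
    dirDeriv_add u (differentiableAt_dirDeriv u hQu) (differentiableAt_dirDeriv w hQw)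
  have hDiff : ∂[u] (quadratureDiff F A Q u w) p
      = (1 / 2) * (∂[u] (quadratureTensor F A Q u u) p - ∂[u] (quadratureTensor F A Q w w) p) := by
    rw [quadratureDiff_eq_half_sub, dirDeriv_mul u (by fun_prop) ((hT u u).fun_sub (hT w w)),
      dirDeriv_sub u (hT u u) (hT w w), dirDeriv_const]
    ring
  rw [quadratureDiv, hDiff, hLap]
  simp only [dirDeriv_quadratureTensor hF hA hQ hQ0, dirDeriv_comm w u hQw, dirDeriv_comm w u hF,
    dirDeriv_comm w u hA, fieldOpF, fieldOpA, gradSq]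
  field_simp
  ring

lemma wedge_quadratureDiv :
    ∂[w] Q p * quadratureDiv F A Q u w p - ∂[u] Q p * quadratureDiv F A Q w u p
      = (1 / 2) * gradWedge u w Q (planarLaplacian u w Q) p
        + 2 * Q p * fieldOpF u w F A Q p * gradWedge u w Q F p
        - exp (4 * F p) / (2 * Q p) * fieldOpA u w F A Q p * gradWedge u w Q A p := by
  rw [quadratureDiv_eq hF hA hQ hQ0, quadratureDiv_eq hF hA hQ hQ0, fieldOpF_swap (w := w),
    fieldOpA_swap (w := w), planarLaplacian_swap u w]
  simp only [gradWedge, gradSq]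
  ring

end Regularity

section Matter

lemma gradWedge_planarLaplacian (hF : DifferentiableAt ℝ F p) (hK : DifferentiableAt ℝ K p)
    (hP : DifferentiableAt ℝ P p) (hQ : DifferentiableAt ℝ Q p)
    (hN9c : planarLaplacian u w Q =ᶠ[nhds p]
      fun q => 2 * κ * exp (2 * (-F q + K q)) * P q * Q q) :
    gradWedge u w Q (planarLaplacian u w Q) p
      = 2 * κ * exp (2 * (-F p + K p)) * Q p
        * (gradWedge u w Q P p
          + 2 * P p * (gradWedge u w Q K p - gradWedge u w Q F p)) := by
  simp (disch := fun_prop) only [gradWedge, dirDeriv_congr _ hN9c, dirDeriv_mul, dirDeriv_exp,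
    dirDeriv_add, dirDeriv_neg, dirDeriv_const]
  ring

lemma EulerRelationAt.dirDeriv_pressure (hF : DifferentiableAt ℝ F p)
    (hA : DifferentiableAt ℝ A p) (hQ : DifferentiableAt ℝ Q p)
    (hE : fluidNorm F A Q ω p ≠ 0) (h : EulerRelationAt F A Q P ε ω v p) :
    ∂[v] P p = -((ε p + P p) / fluidNorm F A Q ω p)
      * (fluidSum F A Q ω p * ∂[v] F p
        + exp (2 * F p) * ω p * (1 + ω p * A p) * ∂[v] A p
        - exp (-(2 * F p)) * ω p ^ 2 * Q p * ∂[v] Q p) := by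
  rw [h]
  simp (disch := fun_prop) only [dirDeriv_mul, dirDeriv_exp, dirDeriv_add, dirDeriv_neg,
    dirDeriv_sq, dirDeriv_const]
  field_simp
  simp only [fluidSum]
  ring

lemma gradWedge_pressure (hF : DifferentiableAt ℝ F p) (hA : DifferentiableAt ℝ A p)
    (hQ : DifferentiableAt ℝ Q p) (hE : fluidNorm F A Q ω p ≠ 0)
    (hu : EulerRelationAt F A Q P ε ω u p) (hw : EulerRelationAt F A Q P ε ω w p) :
    gradWedge u w Q P p = -((ε p + P p) / fluidNorm F A Q ω p)
      * (fluidSum F A Q ω p * gradWedge u w Q F p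
        + exp (2 * F p) * ω p * (1 + ω p * A p) * gradWedge u w Q A p) := by
  simp only [gradWedge, hu.dirDeriv_pressure hF hA hQ hE, hw.dirDeriv_pressure hF hA hQ hE]
  ring

/-- The terms in `∇Q ∧ ∇P`, `∇Q ∧ ∇F` and `∇Q ∧ ∇A` cancel by the Euler relation. -/
lemma wedge_quadratureDiv_of_fieldEquations (hF : ContDiffAt ℝ 2 F p) (hA : ContDiffAt ℝ 2 A p)
    (hQ : ContDiffAt ℝ 3 Q p) (hK : DifferentiableAt ℝ K p) (hP : DifferentiableAt ℝ P p)
    (hQ0 : Q p ≠ 0) (hE : fluidNorm F A Q ω p ≠ 0)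
    (hu : EulerRelationAt F A Q P ε ω u p) (hw : EulerRelationAt F A Q P ε ω w p)
    (hN9a : fieldOpF u w F A Q p = (κ / 2) * exp (2 * (-F p + K p))
      * ((ε p + P p) * fluidSum F A Q ω p / fluidNorm F A Q ω p + 2 * P p))
    (hN9b : fieldOpA u w F A Q p = -(2 * κ) * exp (2 * (-F p + K p)) * (ε p + P p)
      * (exp (-(2 * F p)) * ω p * Q p ^ 2 * (1 + ω p * A p)) / fluidNorm F A Q ω p)
    (hN9c : planarLaplacian u w Q =ᶠ[nhds p]
      fun q => 2 * κ * exp (2 * (-F q + K q)) * P q * Q q) :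
    ∂[w] Q p * quadratureDiv F A Q u w p - ∂[u] Q p * quadratureDiv F A Q w u p
      = 2 * κ * exp (2 * (-F p + K p)) * P p * Q p * gradWedge u w Q K p := by
  have hF' := hF.differentiableAt two_ne_zero
  have hA' := hA.differentiableAt two_ne_zero
  have hQ' := hQ.differentiableAt three_ne_zero
  have hexp : exp (4 * F p) * exp (-(2 * F p)) = exp (2 * F p) := by
    rw [← exp_add]
    ring_nf
  rw [wedge_quadratureDiv hF hA hQ hQ0, gradWedge_planarLaplacian hF' hK hP hQ' hN9c,
    gradWedge_pressure hF' hA' hQ' hE hu hw, hN9a, hN9b, ← hexp]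
  field_simp
  ring

lemma differentiableOn_union_of_vacuum {O₁ O₂ : Set V} (hO₁ : IsOpen O₁) (hO₂ : IsOpen O₂)
    (hP : DifferentiableOn ℝ P O₁) (hvac : ∀ q ∈ O₂, P q = 0) :
    DifferentiableOn ℝ P (O₁ ∪ O₂) :=
  hP.union_of_isOpen ((differentiableOn_const 0).congr hvac) hO₁ hO₂

lemma eulerRelationAt_union_of_vacuum {O₁ O₂ : Set V} (hO₂ : IsOpen O₂)
    (hO₁ : ∀ q ∈ O₁, EulerRelationAt F A Q P ε ω v q)
    (hvac : ∀ q ∈ O₂, ε q = 0 ∧ P q = 0) :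
    ∀ q ∈ O₁ ∪ O₂, EulerRelationAt F A Q P ε ω v q := by
  rintro q (hq | hq)
  · exact hO₁ q hq
  · have hP : P =ᶠ[nhds q] fun _ => 0 :=
      Filter.eventually_of_mem (hO₂.mem_nhds hq) fun r hr => (hvac r hr).2
    simp [EulerRelationAt, dirDeriv_congr v hP, dirDeriv_const, hvac q hq]

end Matter

lemma gradSq_mul_curl_quadratureGrad (hF : ContDiffAt ℝ 2 F p) (hA : ContDiffAt ℝ 2 A p)
    (hQ : ∀ᶠ q in nhds p, ContDiffAt ℝ 3 Q q) (hQ0 : Q p ≠ 0)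
    (hD : ∀ᶠ q in nhds p, gradSq u w Q q ≠ 0) :
    gradSq u w Q p * (∂[w] (quadratureGradU F A Q u w) p - ∂[u] (quadratureGradW F A Q u w) p)
      = ∂[w] Q p * quadratureDiv F A Q u w p - ∂[u] Q p * quadratureDiv F A Q w u p
        - planarLaplacian u w Q p
          * (∂[w] Q p * quadratureGradU F A Q u w p - ∂[u] Q p * quadratureGradW F A Q u w p) := by
  have hQp : ContDiffAt ℝ 2 Q p := hQ.self_of_nhds.of_le (by norm_num)
  obtain ⟨hX, hY⟩ := differentiableAt_quadratureGrad hF hA hQ.self_of_nhds hQ0 hD.self_of_nhds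
  have hcomm : quadratureTensor F A Q w u =ᶠ[nhds p] quadratureTensor F A Q u w :=
    hQ.mono fun q hq => quadratureTensor_comm (hq.of_le (by norm_num))
  rw [gradSq_mul_curl_of_cauchyRiemann hQp hX hY (hD.mono fun _ => quadratureGrad_solves_diff)
    (hD.mono fun _ => quadratureGrad_solves_tensor), quadratureDiv, quadratureDiv,
    quadratureDiff_swap (u := u) (w := w), dirDeriv_neg, dirDeriv_congr u hcomm]
  ring

theorem stmt_5_general {O : Set V} (hO : IsOpen O) (hF : ContDiffOn ℝ 2 F O)
    (hA : ContDiffOn ℝ 2 A O) (hQ : ContDiffOn ℝ 3 Q O) (hK : DifferentiableOn ℝ K O)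
    (hP : DifferentiableOn ℝ P O) (hQ0 : ∀ p ∈ O, Q p ≠ 0)
    (hE : ∀ p ∈ O, fluidNorm F A Q ω p ≠ 0) (hD : ∀ p ∈ O, gradSq u w Q p ≠ 0)
    (hu : ∀ p ∈ O, EulerRelationAt F A Q P ε ω u p)
    (hw : ∀ p ∈ O, EulerRelationAt F A Q P ε ω w p)
    (hN9a : ∀ p ∈ O, fieldOpF u w F A Q p = (κ / 2) * exp (2 * (-F p + K p))
      * ((ε p + P p) * fluidSum F A Q ω p / fluidNorm F A Q ω p + 2 * P p))
    (hN9b : ∀ p ∈ O, fieldOpA u w F A Q p = -(2 * κ) * exp (2 * (-F p + K p)) * (ε p + P p)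
      * (exp (-(2 * F p)) * ω p * Q p ^ 2 * (1 + ω p * A p)) / fluidNorm F A Q ω p)
    (hN9c : ∀ p ∈ O, planarLaplacian u w Q p
      = 2 * κ * exp (2 * (-F p + K p)) * P p * Q p) :
    ∀ p ∈ O, ∂[w] (quadratureGradU F A Q u w) p - ∂[u] (quadratureGradW F A Q u w) p
      = 2 * κ * exp (2 * (-F p + K p)) * P p * Q p * (gradSq u w Q p)⁻¹
        * ((∂[u] K p - quadratureGradU F A Q u w p) * ∂[w] Q p
          - (∂[w] K p - quadratureGradW F A Q u w p) * ∂[u] Q p) := by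
  intro p hp
  have hOp : O ∈ nhds p := hO.mem_nhds hp
  have hFp := hF.contDiffAt hOp
  have hAp := hA.contDiffAt hOp
  have hcurl := gradSq_mul_curl_quadratureGrad hFp hAp
    (Filter.eventually_of_mem hOp fun q hq => hQ.contDiffAt (hO.mem_nhds hq)) (hQ0 p hp)
    (Filter.eventually_of_mem hOp hD)
  rw [wedge_quadratureDiv_of_fieldEquations hFp hAp (hQ.contDiffAt hOp)
    (hK.differentiableAt hOp) (hP.differentiableAt hOp) (hQ0 p hp) (hE p hp) (hu p hp) (hw p hp)
    (hN9a p hp) (hN9b p hp) (Filter.eventually_of_mem hOp hN9c), hN9c p hp, gradWedge] at hcurl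
  have := hD p hp
  field_simp
  linear_combination hcurl

end ReducedEquations

/-- **Proposition 5 of the paper (consistency identity).**
Under the Setup with `Pt ∈ C³`, `F, A ∈ C²`, `K ∈ C¹`, condition (C),
`O = O₁ ∪ O₂` with `Ω` constant on `O₁` and vacuum on `O₂`, the Euler relation on `O₁`,
and the reduced equations (N.9a)(N.9b)(N.9c): with `K̃₁, K̃₃` built from the right-hand
sides of (Ya),(Yb), one has
`∂₃K̃₁ − ∂₁K̃₃ = 2κ e^{2(−F+K)} P Pt D⁻¹ [(∂₁K − K̃₁)∂₃Pt − (∂₃K − K̃₃)∂₁Pt]` on `O`. -/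
theorem stmt_5
    (c κ : ℝ) (hc : 0 < c) (hκ : 0 < κ)
    (O : Set (ℝ × ℝ)) (hO : IsOpen O) (hOw : ∀ p ∈ O, 0 < p.1)
    (F A Pt K ρ P Ω : ℝ × ℝ → ℝ)
    (hF : ContDiffOn ℝ 2 F O) (hA : ContDiffOn ℝ 2 A O)
    (hPt : ContDiffOn ℝ 3 Pt O) (hK : ContDiffOn ℝ 1 K O)
    (hPtpos : ∀ p ∈ O, 0 < Pt p)
    (hρc : ContinuousOn ρ O) (hPc : ContinuousOn P O) (hΩc : ContinuousOn Ω O)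
    (hρ0 : ∀ p ∈ O, 0 ≤ ρ p) (hP0 : ∀ p ∈ O, 0 ≤ P p)
    (ε f k m l E Sg : ℝ × ℝ → ℝ)
    (hε : ε = fun p => c ^ 2 * ρ p)
    (hf : f = fun p => exp (2 * F p))
    (hk : k = fun p => -exp (2 * F p) * A p)
    (hm : m = fun p => 2 * (-F p + K p))
    (hl : l = fun p => -exp (2 * F p) * (A p) ^ 2 + exp (-(2 * F p)) * (Pt p) ^ 2)
    (hE : E = fun p => exp (2 * F p) * (1 + Ω p * A p / c) ^ 2
      - exp (-(2 * F p)) * (Ω p ^ 2 / c ^ 2) * (Pt p) ^ 2)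
    (hEpos : ∀ p ∈ O, 0 < E p)
    (hSg : Sg = fun p => d1 f p * d1 l p + d3 f p * d3 l p + (d1 k p) ^ 2 + (d3 k p) ^ 2)
    (hC : ∀ p ∈ O, (d1 Pt p) ^ 2 + (d3 Pt p) ^ 2 ≠ 0)
    (O₁ O₂ : Set (ℝ × ℝ)) (hO₁ : IsOpen O₁) (hO₂ : IsOpen O₂) (hO12 : O = O₁ ∪ O₂)
    (hΩconst : ∃ Ωc : ℝ, ∀ p ∈ O₁, Ω p = Ωc)
    (hvac : ∀ p ∈ O₂, ρ p = 0 ∧ P p = 0)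
    (hPC1 : ContDiffOn ℝ 1 P O₁)
    (hEuler1 : ∀ p ∈ O₁, d1 P p = (ε p + P p) * (1 / (2 * E p))
      * (-(d1 f p) + 2 * (Ω p / c) * d1 k p + (Ω p ^ 2 / c ^ 2) * d1 l p))
    (hEuler3 : ∀ p ∈ O₁, d3 P p = (ε p + P p) * (1 / (2 * E p))
      * (-(d3 f p) + 2 * (Ω p / c) * d3 k p + (Ω p ^ 2 / c ^ 2) * d3 l p))
    (hN9a : ∀ p ∈ O,
      d1 (d1 F) p + d3 (d3 F) p
        + (1 / Pt p) * (d1 Pt p * d1 F p + d3 Pt p * d3 F p)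
        + (exp (4 * F p) / (2 * (Pt p) ^ 2)) * ((d1 A p) ^ 2 + (d3 A p) ^ 2)
      = (κ / 2) * exp (2 * (-F p + K p)) *
          ((ε p + P p) * (exp (2 * F p) * (1 + Ω p * A p / c) ^ 2
            + exp (-(2 * F p)) * (Ω p ^ 2 / c ^ 2) * (Pt p) ^ 2) / E p + 2 * P p))
    (hN9b : ∀ p ∈ O,
      d1 (d1 A) p + d3 (d3 A) p
        - (1 / Pt p) * (d1 Pt p * d1 A p + d3 Pt p * d3 A p)
        + 4 * (d1 F p * d1 A p + d3 F p * d3 A p)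
      = -(2 * κ) * exp (2 * (-F p + K p)) * (ε p + P p) *
          (exp (-(2 * F p)) * (Ω p / c) * (Pt p) ^ 2 * (1 + Ω p * A p / c)) / E p)
    (hN9c : ∀ p ∈ O,
      d1 (d1 Pt) p + d3 (d3 Pt) p
      = 2 * κ * exp (2 * (-F p + K p)) * P p * Pt p)
    (D RHYa RHYb Kt1 Kt3 : ℝ × ℝ → ℝ)
    (hD : D = fun p => (d1 Pt p) ^ 2 + (d3 Pt p) ^ 2)
    (hRHYa : RHYa = fun p =>
      (1/2) * (d1 (d1 Pt) p - d3 (d3 Pt) p)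
        + Pt p * ((d1 F p) ^ 2 - (d3 F p) ^ 2)
        - (exp (4 * F p) / (4 * Pt p)) * ((d1 A p) ^ 2 - (d3 A p) ^ 2))
    (hRHYb : RHYb = fun p =>
      d1 (d3 Pt) p + 2 * Pt p * d1 F p * d3 F p
        - (exp (4 * F p) / (2 * Pt p)) * (d1 A p * d3 A p))
    (hKt1 : Kt1 = fun p => (D p)⁻¹ * (d1 Pt p * RHYa p + d3 Pt p * RHYb p))
    (hKt3 : Kt3 = fun p => (D p)⁻¹ * (-(d3 Pt p) * RHYa p + d1 Pt p * RHYb p)) :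
    ∀ p ∈ O,
      d3 Kt1 p - d1 Kt3 p
      = 2 * κ * exp (2 * (-F p + K p)) * P p * Pt p * (D p)⁻¹ *
          ((d1 K p - Kt1 p) * d3 Pt p - (d3 K p - Kt3 p) * d1 Pt p) := by
  subst hO12 hε hf hk hl hE hD hRHYa hRHYb hKt1 hKt3
  simp only [mul_div_right_comm _ _ c, ← div_pow] at hEpos hEuler1 hEuler3 hN9a hN9b
  have hvac' : ∀ q ∈ O₂, c ^ 2 * ρ q = 0 ∧ P q = 0 := fun q hq => by simp [hvac q hq]
  have hP := differentiableOn_union_of_vacuum hO₁ hO₂ (hPC1.differentiableOn one_ne_zero)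
    fun q hq => (hvac q hq).2
  exact stmt_5_general hO hF hA hPt (hK.differentiableOn one_ne_zero) hP
    (fun p hp => (hPtpos p hp).ne') (fun p hp => (hEpos p hp).ne') hC
    (eulerRelationAt_union_of_vacuum hO₂ hEuler1 hvac')
    (eulerRelationAt_union_of_vacuum hO₂ hEuler3 hvac') hN9a hN9b hN9c
end

section
/- (Consistency theorem.) Let 0 < R₁ < R₀ < R and let D = {(ϖ,z) ∈ ℝ² : √(ϖ²+z²) < R}. Assume the Setup holds with O an open neighbourhood of the closure D̄, except that Π is only required to be nonvanishing (Π ≠ 0 on O, the requirement ϖ > 0 being dropped) and K is only required to be continuous on D̄. Assume the equation-of-state/Euler hypotheses with u : O → ℝ of class C², and in addition Π is C³, F and A are C²; Ω is constant on {√(ϖ²+z²) ≤ R₀}; u ≤ 0 (hence ρ = P = 0) on {√(ϖ²+z²) ≥ R₁}; and (C): (∂₁Π)² + (∂₃Π)² ≠ 0 on D̄. Suppose F, A, Π, u satisfy (N.9a), (N.9b), (N.9c) on O with this K. Define D₀ := (∂₁Π)² + (∂₃Π)², K̃₁ := D₀⁻¹·(∂₁Π·RH(Ya) + ∂₃Π·RH(Yb))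 and K̃₃ := D₀⁻¹·(−∂₃Π·RH(Ya) + ∂₁Π·RH(Yb)), where RH(Ya), RH(Yb) denote the right-hand sides of (Ya), (Yb), and for a constant K_O define K̃(ϖ,z) := K_O + ∫₀^z K̃₃(0,z′) dz′ + ∫₀^ϖ K̃₁(ϖ′,z) dϖ′ for (ϖ,z) ∈ D. If K̃ = K on D, then ∂₁K = K̃₁ and ∂₃K = K̃₃ on D; that is, equations (Ya) and (Yb) are satisfied on D. -/
open Real

/-!
Write `(X₁, X₃)` for the solution of (Ya), (Yb) regarded as a linear system for `∇K`, and let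
`v = (∂₃Π, -∂₁Π)` be tangent to the level curves of `Π`. The right-hand sides of (Ya), (Yb) are the
entries of a trace-free symmetric tensor. Inserting the linear system, the component along `v` of its divergence
is `ΔΠ (v₁ X₁ + v₃ X₃) + |∇Π|² (∂₃X₁ - ∂₁X₃)`; inserting the field equations and the Euler
equation, it is `ΔΠ ∂ᵥK`. Integrating horizontally always gives `∂₁K = X₁`, so the curl
`∂₃X₁ - ∂₁X₃` is a multiple of the defect `∂₃K - X₃`. This curl is also the horizontal derivative of
the defect, which vanishes on the axis: it solves a homogeneous linear ODE and is zero.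
-/

open Filter Set Topology MeasureTheory
open scoped Interval

section PartialDerivatives

variable {f w a b a₁ b₁ a₂ b₂ X₁ X₃ : ℝ × ℝ → ℝ} {p v : ℝ × ℝ} {m n : WithTop ℕ∞}

lemma fderiv_apply_eq_d1_d3 (f : ℝ × ℝ → ℝ) (p v : ℝ × ℝ) :
    fderiv ℝ f p v = v.1 * d1 f p + v.2 * d3 f p := by
  have hv : v = v.1 • ((1, 0) : ℝ × ℝ) + v.2 • ((0, 1) : ℝ × ℝ) := by ext <;> simp
  conv_lhs => rw [hv, map_add, map_smul, map_smul]
  rfl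

lemma hasDerivAt_d1 (hf : DifferentiableAt ℝ f p) :
    HasDerivAt (fun t => f (t, p.2)) (d1 f p) p.1 :=
  hf.hasFDerivAt.comp_hasDerivAt (f := fun t => (t, p.2)) p.1
    ((hasDerivAt_id p.1).prodMk (hasDerivAt_const p.1 p.2))

lemma hasDerivAt_d3 (hf : DifferentiableAt ℝ f p) :
    HasDerivAt (fun t => f (p.1, t)) (d3 f p) p.2 :=
  hf.hasFDerivAt.comp_hasDerivAt (f := fun t => (p.1, t)) p.2
    ((hasDerivAt_const p.2 p.1).prodMk (hasDerivAt_id p.2))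

lemma contDiffAt_d1 (hf : ContDiffAt ℝ n f p) (hmn : m + 1 ≤ n) : ContDiffAt ℝ m (d1 f) p :=
  (hf.fderiv_right hmn).clm_apply contDiffAt_const

lemma contDiffAt_d3 (hf : ContDiffAt ℝ n f p) (hmn : m + 1 ≤ n) : ContDiffAt ℝ m (d3 f) p :=
  (hf.fderiv_right hmn).clm_apply contDiffAt_const

lemma differentiableAt_d1 (hf : ContDiffAt ℝ 2 f p) : DifferentiableAt ℝ (d1 f) p :=
  (contDiffAt_d1 (m := 1) hf (by norm_num)).differentiableAt one_ne_zero

lemma differentiableAt_d3 (hf : ContDiffAt ℝ 2 f p) : DifferentiableAt ℝ (d3 f) p :=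
  (contDiffAt_d3 (m := 1) hf (by norm_num)).differentiableAt one_ne_zero

lemma d3_d1_comm (hf : ContDiffAt ℝ 2 f p) : d3 (d1 f) p = d1 (d3 f) p := by
  have hd : DifferentiableAt ℝ (fderiv ℝ f) p :=
    (hf.fderiv_right (m := 1) (by norm_num)).differentiableAt one_ne_zero
  have second (v w : ℝ × ℝ) :
      fderiv ℝ (fun q => fderiv ℝ f q v) p w = fderiv ℝ (fderiv ℝ f) p w v := by
    simp [fderiv_clm_apply hd (differentiableAt_const v)]
  exact (second _ _).trans <|
    (hf.isSymmSndFDerivAt (by simp)).eq _ _ |>.trans (second _ _).symm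

/-- The Laplacian `∂₁² + ∂₃²` of the flat meridian plane. -/
noncomputable def lap (f : ℝ × ℝ → ℝ) : ℝ × ℝ → ℝ := fun p => d1 (d1 f) p + d3 (d3 f) p

/-- The squared Euclidean length `|∇f|²` of the gradient. -/
noncomputable def normSqGrad (f : ℝ × ℝ → ℝ) : ℝ × ℝ → ℝ := fun p => d1 f p ^ 2 + d3 f p ^ 2

/-- The weighted Laplacian `div (w ∇f)`, expanded by the Leibniz rule. -/
noncomputable def divGrad (w f : ℝ × ℝ → ℝ) : ℝ × ℝ → ℝ :=
  fun p => w p * lap f p + (d1 w p * d1 f p + d3 w p * d3 f p)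

/-- The component along `v` of the divergence of the trace-free symmetric tensor
`!![a, b; b, -a]`. -/
noncomputable def traceFreeDiv (a b : ℝ × ℝ → ℝ) (v p : ℝ × ℝ) : ℝ :=
  v.1 * (d1 a p + d3 b p) + v.2 * (d1 b p - d3 a p)

/-- The diagonal entry of the trace-free part of `2 w ∇f ⊗ ∇f`. -/
noncomputable def stressDiag (w f : ℝ × ℝ → ℝ) : ℝ × ℝ → ℝ :=
  fun p => w p * (d1 f p ^ 2 - d3 f p ^ 2)

/-- The off-diagonal entry of the trace-free part of `2 w ∇f ⊗ ∇f`. -/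
noncomputable def stressOff (w f : ℝ × ℝ → ℝ) : ℝ × ℝ → ℝ :=
  fun p => 2 * w p * d1 f p * d3 f p

lemma differentiableAt_stressDiag (hw : DifferentiableAt ℝ w p) (hf : ContDiffAt ℝ 2 f p) :
    DifferentiableAt ℝ (stressDiag w f) p :=
  hw.mul (((differentiableAt_d1 hf).pow 2).sub ((differentiableAt_d3 hf).pow 2))

lemma differentiableAt_stressOff (hw : DifferentiableAt ℝ w p) (hf : ContDiffAt ℝ 2 f p) :
    DifferentiableAt ℝ (stressOff w f) p :=
  ((hw.const_mul 2).mul (differentiableAt_d1 hf)).mul (differentiableAt_d3 hf)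

lemma traceFreeDiv_eq_of_hasFDerivAt {a' b' : ℝ × ℝ →L[ℝ] ℝ} (ha : HasFDerivAt a a' p)
    (hb : HasFDerivAt b b' p) : traceFreeDiv a b v p =
      v.1 * (a' (1, 0) + b' (0, 1)) + v.2 * (b' (1, 0) - a' (0, 1)) := by
  simp only [traceFreeDiv, d1, d3, ha.fderiv, hb.fderiv]

lemma traceFreeDiv_congr (ha : a₁ =ᶠ[𝓝 p] a₂) (hb : b₁ =ᶠ[𝓝 p] b₂) :
    traceFreeDiv a₁ b₁ v p = traceFreeDiv a₂ b₂ v p := by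
  simp only [traceFreeDiv, d1, d3, ha.fderiv_eq, hb.fderiv_eq]

lemma traceFreeDiv_add (ha₁ : DifferentiableAt ℝ a₁ p) (hb₁ : DifferentiableAt ℝ b₁ p)
    (ha₂ : DifferentiableAt ℝ a₂ p) (hb₂ : DifferentiableAt ℝ b₂ p) :
    traceFreeDiv (a₁ + a₂) (b₁ + b₂) v p = traceFreeDiv a₁ b₁ v p + traceFreeDiv a₂ b₂ v p := by
  simp only [traceFreeDiv, d1, d3, fderiv_add ha₁ ha₂, fderiv_add hb₁ hb₂, add_apply]
  ring

lemma traceFreeDiv_sub (ha₁ : DifferentiableAt ℝ a₁ p) (hb₁ : DifferentiableAt ℝ b₁ p)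
    (ha₂ : DifferentiableAt ℝ a₂ p) (hb₂ : DifferentiableAt ℝ b₂ p) :
    traceFreeDiv (a₁ - a₂) (b₁ - b₂) v p = traceFreeDiv a₁ b₁ v p - traceFreeDiv a₂ b₂ v p := by
  simp only [traceFreeDiv, d1, d3, fderiv_sub ha₁ ha₂, fderiv_sub hb₁ hb₂, sub_apply]
  ring

lemma traceFreeDiv_stress (hw : DifferentiableAt ℝ w p) (hf : ContDiffAt ℝ 2 f p) :
    traceFreeDiv (stressDiag w f) (stressOff w f) v p =
      2 * fderiv ℝ f p v * divGrad w f p - fderiv ℝ w p v * normSqGrad f p := by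
  have h₁ := (differentiableAt_d1 hf).hasFDerivAt
  have h₃ := (differentiableAt_d3 hf).hasFDerivAt
  have hdiag : HasFDerivAt (stressDiag w f) _ p :=
    hw.hasFDerivAt.mul ((h₁.pow 2).sub (h₃.pow 2))
  have hoff : HasFDerivAt (stressOff w f) _ p := ((hw.hasFDerivAt.const_mul 2).mul h₁).mul h₃
  have hcomm : d3 (d1 f) p = d1 (d3 f) p := d3_d1_comm hf
  rw [traceFreeDiv_eq_of_hasFDerivAt hdiag hoff]
  simp only [fderiv_apply_eq_d1_d3, add_apply, sub_apply, smul_apply,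
    smul_eq_mul, nsmul_eq_mul, Pi.mul_apply, hcomm, divGrad, lap, normSqGrad]
  push_cast
  ring

lemma traceFreeDiv_hessian (hf : ContDiffAt ℝ 3 f p) :
    traceFreeDiv ((1 / 2 : ℝ) • (d1 (d1 f) - d3 (d3 f))) (d1 (d3 f)) v p =
      1 / 2 * fderiv ℝ (lap f) p v := by
  have hf₁ : ContDiffAt ℝ 2 (d1 f) p := contDiffAt_d1 hf (by norm_num)
  have hf₃ : ContDiffAt ℝ 2 (d3 f) p := contDiffAt_d3 hf (by norm_num)
  have h₁₁ := (differentiableAt_d1 hf₁).hasFDerivAt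
  have h₁₃ := (differentiableAt_d1 hf₃).hasFDerivAt
  have h₃₃ := (differentiableAt_d3 hf₃).hasFDerivAt
  have hlap : HasFDerivAt (lap f) _ p := h₁₁.add h₃₃
  have hmixed : d3 (d1 f) =ᶠ[𝓝 p] d1 (d3 f) := by
    filter_upwards [hf.eventually (by simp)] with q hq using
      d3_d1_comm (hq.of_le (by norm_num))
  have h₁₁₃ : d1 (d1 (d3 f)) p = d3 (d1 (d1 f)) p := by
    rw [d3_d1_comm hf₁, d1, d1, hmixed.fderiv_eq]
  have h₁₃₃ : d3 (d1 (d3 f)) p = d1 (d3 (d3 f)) p := d3_d1_comm hf₃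
  rw [traceFreeDiv_eq_of_hasFDerivAt ((h₁₁.sub h₃₃).const_smul (1 / 2 : ℝ)) h₁₃, hlap.fderiv]
  simp only [fderiv_apply_eq_d1_d3, add_apply, sub_apply, smul_apply,
    smul_eq_mul, h₁₁₃, h₁₃₃]
  ring

lemma traceFreeDiv_gradient_rotation (hf : ContDiffAt ℝ 2 f p) (hX₁ : DifferentiableAt ℝ X₁ p)
    (hX₃ : DifferentiableAt ℝ X₃ p) :
    traceFreeDiv (d1 f * X₁ - d3 f * X₃) (d3 f * X₁ + d1 f * X₃) v p =
      lap f p * (v.1 * X₁ p + v.2 * X₃ p) + fderiv ℝ f p v * (d1 X₁ p + d3 X₃ p)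
        + (v.1 * d3 f p - v.2 * d1 f p) * (d3 X₁ p - d1 X₃ p) := by
  have h₁ := (differentiableAt_d1 hf).hasFDerivAt
  have h₃ := (differentiableAt_d3 hf).hasFDerivAt
  have hcomm : d3 (d1 f) p = d1 (d3 f) p := d3_d1_comm hf
  rw [traceFreeDiv_eq_of_hasFDerivAt
    ((h₁.mul hX₁.hasFDerivAt).sub (h₃.mul hX₃.hasFDerivAt))
    ((h₃.mul hX₁.hasFDerivAt).add (h₁.mul hX₃.hasFDerivAt))]
  simp only [fderiv_apply_eq_d1_d3, add_apply, sub_apply, smul_apply,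
    smul_eq_mul, hcomm, lap]
  ring

end PartialDerivatives

section ParametricIntegral

variable {H E : Type*} [NormedAddCommGroup H] [NormedSpace ℝ H] [NormedAddCommGroup E]
  [NormedSpace ℝ E]

lemma hasFDerivAt_intervalIntegral_of_contDiffOn {f : ℝ × H → E} {U : Set (ℝ × H)}
    (hU : IsOpen U) (hf : ContDiffOn ℝ 1 f U) {a b : ℝ} {x₀ : H}
    (hseg : ∀ t ∈ [[a, b]], (t, x₀) ∈ U) :
    HasFDerivAt (fun x => ∫ t in a..b, f (t, x))
      (∫ t in a..b, (fderiv ℝ f (t, x₀)).comp (.inr ℝ ℝ H)) x₀ := by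
  have hf' : ContinuousOn (fun q => (fderiv ℝ f q).comp (.inr ℝ ℝ H)) U :=
    (hf.continuousOn_fderiv_of_isOpen hU le_rfl).clm_comp continuousOn_const
  have hint {x : H} (hx : ∀ t ∈ [[a, b]], (t, x) ∈ U) :
      IntervalIntegrable (fun t => f (t, x)) volume a b :=
    (hf.continuousOn.comp (by fun_prop) hx).intervalIntegrable
  have hf'₀ : ContinuousOn (fun t => (fderiv ℝ f (t, x₀)).comp (.inr ℝ ℝ H)) [[a, b]] :=
    hf'.comp (f := fun t => (t, x₀)) (by fun_prop) hseg
  obtain ⟨C, hC⟩ := isCompact_uIcc.exists_bound_of_continuousOn hf'₀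
  have hV : IsOpen {q ∈ U | ‖(fderiv ℝ f q).comp (.inr ℝ ℝ H)‖ < C + 1} :=
    hf'.norm.isOpen_inter_preimage hU isOpen_Iio
  obtain ⟨S, N, -, hN, hS, hxN, hSN⟩ := generalized_tube_lemma (s := [[a, b]]) isCompact_uIcc
    (isCompact_singleton (x := x₀)) hV (by
      rintro ⟨t, x⟩ ⟨ht, rfl⟩
      exact ⟨hseg t ht, (hC t ht).trans_lt (lt_add_one C)⟩)
  have htube {t : ℝ} (ht : t ∈ [[a, b]]) {x : H} (hx : x ∈ N) := hSN (mk_mem_prod (hS ht) hx)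
  have hNx : N ∈ 𝓝 x₀ := hN.mem_nhds (hxN rfl)
  refine intervalIntegral.hasFDerivAt_integral_of_dominated_of_fderiv_le
    (F' := fun x t => (fderiv ℝ f (t, x)).comp (.inr ℝ ℝ H)) (bound := fun _ => C + 1) hNx
    ?_ (hint hseg) hf'₀.intervalIntegrable.def'.aestronglyMeasurable ?_ intervalIntegrable_const ?_
  · filter_upwards [hNx] with x hx using
      (hint fun t ht => (htube ht hx).1).def'.aestronglyMeasurable
  · exact .of_forall fun t ht x hx => (htube (uIoc_subset_uIcc ht) hx).2.le
  · refine .of_forall fun t ht x hx => ?_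
    have hfx := (hf.differentiableOn one_ne_zero).differentiableAt
      (hU.mem_nhds (htube (uIoc_subset_uIcc ht) hx).1)
    exact hfx.hasFDerivAt.comp x (hasFDerivAt_prodMk_right t x)

end ParametricIntegral

section LineIntegral

variable {E : Type*} [NormedAddCommGroup E] [NormedSpace ℝ E]

lemma hasDerivAt_intervalIntegral_of_continuousOn [CompleteSpace E] {g : ℝ → E} {s : Set ℝ}
    {a b : ℝ} (hs : IsOpen s) (hg : ContinuousOn g s) (hab : [[a, b]] ⊆ s) :
    HasDerivAt (fun x => ∫ t in a..x, g t) (g b) b :=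
  intervalIntegral.integral_hasDerivAt_right (hg.mono hab).intervalIntegrable
    (hg.stronglyMeasurableAtFilter hs b (hab right_mem_uIcc))
    (hg.continuousAt (hs.mem_nhds (hab right_mem_uIcc)))

lemma eq_zero_of_hasDerivAt_smul_self {g : ℝ → E} {b : ℝ → ℝ} {x₀ x : ℝ}
    (hb : ContinuousOn b [[x₀, x]]) (hg : ∀ t ∈ [[x₀, x]], HasDerivAt g (b t • g t) t)
    (h₀ : g x₀ = 0) : g x = 0 := by
  let ℓ : ℝ →ᵃ[ℝ] ℝ := AffineMap.lineMap x₀ x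
  have hℓ {s : ℝ} (hs : s ∈ Icc (0 : ℝ) 1) : ℓ s ∈ [[x₀, x]] := by
    rw [← segment_eq_uIcc, segment_eq_image_lineMap]
    exact mem_image_of_mem _ hs
  obtain ⟨C, hC⟩ := isCompact_uIcc.exists_bound_of_continuousOn hb
  have hgℓ {s : ℝ} (hs : s ∈ Icc (0 : ℝ) 1) :
      HasDerivAt (g ∘ ℓ) ((x - x₀) • b (ℓ s) • g (ℓ s)) s :=
    (hg _ (hℓ hs)).scomp s AffineMap.hasDerivAt_lineMap
  have hbound : ∀ s ∈ Ico (0 : ℝ) 1,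
      ‖(x - x₀) • b (ℓ s) • g (ℓ s)‖ ≤ |x - x₀| * C * ‖(g ∘ ℓ) s‖ := fun s hs => by
    rw [norm_smul, norm_smul, mul_assoc, Real.norm_eq_abs]
    exact mul_le_mul_of_nonneg_left (mul_le_mul_of_nonneg_right
      (hC _ (hℓ (Ico_subset_Icc_self hs))) (norm_nonneg _)) (abs_nonneg _)
  have hzero := eq_zero_of_abs_deriv_le_mul_abs_self_of_eq_zero_right
    (fun s hs => (hgℓ hs).continuousAt.continuousWithinAt)
    (fun s hs => (hgℓ (Ico_subset_Icc_self hs)).hasDerivWithinAt) (by simp [ℓ, h₀]) hbound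
    1 (right_mem_Icc.2 zero_le_one)
  simpa [ℓ] using hzero

end LineIntegral

section Quadrature

/-- An open set of `ℝ × ℝ` that contains, with each of its points, the path from the origin along
the axis `ϖ = 0` and then along a horizontal line, so that `quadrature` only integrates over
paths inside the set. -/
structure IsQuadratureDomain (D : Set (ℝ × ℝ)) : Prop where
  isOpen : IsOpen D
  horizontal_mem : ∀ {p : ℝ × ℝ}, p ∈ D → ∀ {t : ℝ}, t ∈ [[0, p.1]] → (t, p.2) ∈ D
  vertical_mem : ∀ {p : ℝ × ℝ}, p ∈ D → ∀ {t : ℝ}, t ∈ [[0, p.2]] → (0, t) ∈ D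

/-- The potential with value `K₀` at the origin obtained by integrating the covector field
`(X₁, X₃)` along the axis `ϖ = 0` and then horizontally. -/
noncomputable def quadrature (K₀ : ℝ) (X₁ X₃ : ℝ × ℝ → ℝ) : ℝ × ℝ → ℝ := fun p =>
  K₀ + (∫ t in (0 : ℝ)..p.2, X₃ (0, t)) + ∫ t in (0 : ℝ)..p.1, X₁ (t, p.2)

variable {D : Set (ℝ × ℝ)} {X X₁ X₃ K b : ℝ × ℝ → ℝ} {K₀ : ℝ} {p : ℝ × ℝ}

lemma isQuadratureDomain_disc (R : ℝ) :
    IsQuadratureDomain {p : ℝ × ℝ | p.1 ^ 2 + p.2 ^ 2 < R ^ 2} where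
  isOpen := isOpen_lt (by fun_prop) (by fun_prop)
  horizontal_mem {p} hp t ht := by
    have : t ^ 2 ≤ p.1 ^ 2 := sq_le_sq.2 (by simpa using abs_sub_left_of_mem_uIcc ht)
    exact (add_le_add_left this _).trans_lt hp
  vertical_mem {p} hp t ht := by
    have : t ^ 2 ≤ p.2 ^ 2 := sq_le_sq.2 (by simpa using abs_sub_left_of_mem_uIcc ht)
    exact (add_le_add ((zero_pow two_ne_zero).trans_le (sq_nonneg p.1)) this).trans_lt hp

lemma hasDerivAt_horizontal_integral (hD : IsQuadratureDomain D) (hX : ContinuousOn X D)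
    (hp : p ∈ D) : HasDerivAt (fun x => ∫ t in (0 : ℝ)..x, X (t, p.2)) (X p) p.1 :=
  hasDerivAt_intervalIntegral_of_continuousOn (g := fun t => X (t, p.2))
    (hD.isOpen.preimage (f := fun t : ℝ => (t, p.2)) (by fun_prop))
    (hX.comp (by fun_prop) fun _ ht => ht) fun _ ht => hD.horizontal_mem hp ht

lemma hasDerivAt_axis_integral (hD : IsQuadratureDomain D) (hX : ContinuousOn X D)
    (hp : p ∈ D) : HasDerivAt (fun z => ∫ t in (0 : ℝ)..z, X (0, t)) (X (0, p.2)) p.2 :=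
  hasDerivAt_intervalIntegral_of_continuousOn (g := fun t => X (0, t))
    (hD.isOpen.preimage (f := fun t : ℝ => ((0 : ℝ), t)) (by fun_prop))
    (hX.comp (by fun_prop) fun _ ht => ht) fun _ ht => hD.vertical_mem hp ht

lemma differentiableAt_horizontal_integral (hD : IsQuadratureDomain D) (hX : ContDiffOn ℝ 1 X D)
    (hp : p ∈ D) :
    DifferentiableAt ℝ (fun q : ℝ × ℝ => ∫ t in (0 : ℝ)..q.1, X (t, q.2)) p := by
  set σ : ℝ × ℝ × ℝ → ℝ × ℝ := fun r => (r.2.1 * r.1, r.2.2)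
  have hσ : ContDiff ℝ 1 σ := by fun_prop
  -- Rescaling to a fixed interval makes this a parametric integral.
  have hrescale (q : ℝ × ℝ) :
      ∫ t in (0 : ℝ)..q.1, X (t, q.2) = q.1 * ∫ s in (0 : ℝ)..1, X (σ (s, q)) := by
    simpa using (intervalIntegral.smul_integral_comp_mul_left (a := 0) (b := 1)
      (fun t => X (t, q.2)) q.1).symm
  have hseg : ∀ s ∈ [[(0 : ℝ), 1]], (s, p) ∈ σ ⁻¹' D := fun s hs => by
    refine hD.horizontal_mem hp ?_
    rw [← segment_eq_uIcc, segment_eq_image]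
    exact ⟨s, by simpa using hs, by simp [mul_comm]⟩
  have hparam := (hasFDerivAt_intervalIntegral_of_contDiffOn (hD.isOpen.preimage hσ.continuous)
    (hX.comp hσ.contDiffOn fun _ hr => hr) hseg).differentiableAt
  simp only [hrescale]
  exact differentiableAt_fst.mul hparam

lemma hasDerivAt_horizontal_integral_snd (hD : IsQuadratureDomain D) (hX : ContDiffOn ℝ 1 X D)
    (hp : p ∈ D) : HasDerivAt (fun z => ∫ t in (0 : ℝ)..p.1, X (t, z))
      (∫ t in (0 : ℝ)..p.1, d3 X (t, p.2)) p.2 := by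
  have hseg : ∀ t ∈ [[0, p.1]], (t, p.2) ∈ D := fun t ht => hD.horizontal_mem hp ht
  have hcont : ContinuousOn (fun t => (fderiv ℝ X (t, p.2)).comp (.inr ℝ ℝ ℝ)) [[0, p.1]] :=
    ((hX.continuousOn_fderiv_of_isOpen hD.isOpen le_rfl).comp (f := fun t => (t, p.2))
      (by fun_prop) hseg).clm_comp continuousOn_const
  have h := (hasFDerivAt_intervalIntegral_of_contDiffOn hD.isOpen hX hseg).hasDerivAt
  rwa [ContinuousLinearMap.intervalIntegral_apply hcont.intervalIntegrable] at h

lemma differentiableAt_quadrature (hD : IsQuadratureDomain D) (hX₁ : ContDiffOn ℝ 1 X₁ D)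
    (hX₃ : ContinuousOn X₃ D) (hp : p ∈ D) : DifferentiableAt ℝ (quadrature K₀ X₁ X₃) p :=
  (((hasDerivAt_axis_integral hD hX₃ hp).differentiableAt.comp p differentiableAt_snd).const_add
    K₀).add (differentiableAt_horizontal_integral hD hX₁ hp)

lemma d1_quadrature (hD : IsQuadratureDomain D) (hX₁ : ContDiffOn ℝ 1 X₁ D)
    (hX₃ : ContinuousOn X₃ D) (hp : p ∈ D) : d1 (quadrature K₀ X₁ X₃) p = X₁ p :=
  (hasDerivAt_d1 (differentiableAt_quadrature hD hX₁ hX₃ hp)).unique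
    ((hasDerivAt_horizontal_integral hD hX₁.continuousOn hp).const_add
      (K₀ + ∫ t in (0 : ℝ)..p.2, X₃ (0, t)))

lemma d3_quadrature (hD : IsQuadratureDomain D) (hX₁ : ContDiffOn ℝ 1 X₁ D)
    (hX₃ : ContinuousOn X₃ D) (hp : p ∈ D) :
    d3 (quadrature K₀ X₁ X₃) p = X₃ (0, p.2) + ∫ t in (0 : ℝ)..p.1, d3 X₁ (t, p.2) :=
  (hasDerivAt_d3 (differentiableAt_quadrature hD hX₁ hX₃ hp)).unique
    (((hasDerivAt_axis_integral hD hX₃ hp).const_add K₀).add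
      (hasDerivAt_horizontal_integral_snd hD hX₁ hp))

theorem d3_quadrature_eq_of_curl_eq (hD : IsQuadratureDomain D) (hX₁ : ContDiffOn ℝ 1 X₁ D)
    (hX₃ : ContDiffOn ℝ 1 X₃ D) (hb : ContinuousOn b D)
    (hcurl : ∀ p ∈ D, d3 X₁ p - d1 X₃ p = b p * (d3 (quadrature K₀ X₁ X₃) p - X₃ p))
    (hp : p ∈ D) : d3 (quadrature K₀ X₁ X₃) p = X₃ p := by
  set W : ℝ × ℝ → ℝ := fun q => X₃ (0, q.2) + (∫ t in (0 : ℝ)..q.1, d3 X₁ (t, q.2)) - X₃ q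
  have hW {q : ℝ × ℝ} (hq : q ∈ D) : d3 (quadrature K₀ X₁ X₃) q - X₃ q = W q := by
    rw [d3_quadrature hD hX₁ hX₃.continuousOn hq]
  have hd3X₁ : ContinuousOn (d3 X₁) D :=
    (hX₁.continuousOn_fderiv_of_isOpen hD.isOpen le_rfl).clm_apply continuousOn_const
  have hWderiv {q : ℝ × ℝ} (hq : q ∈ D) : HasDerivAt (fun t => W (t, q.2)) (b q * W q) q.1 := by
    rw [← hW hq, ← hcurl q hq]
    exact ((hasDerivAt_horizontal_integral hD hd3X₁ hq).const_add (X₃ (0, q.2))).sub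
      (hasDerivAt_d1 ((hX₃.differentiableOn one_ne_zero).differentiableAt (hD.isOpen.mem_nhds hq)))
  have hWp : W p = 0 := eq_zero_of_hasDerivAt_smul_self (g := fun t => W (t, p.2)) (x₀ := 0)
    (b := fun t => b (t, p.2)) (hb.comp (by fun_prop) fun t ht => hD.horizontal_mem hp ht)
    (fun t ht => hWderiv (hD.horizontal_mem hp ht)) (by simp [W])
  exact sub_eq_zero.1 ((hW hp).trans hWp)

theorem hasDerivAt_of_eqOn_quadrature (hD : IsQuadratureDomain D) (hX₁ : ContDiffOn ℝ 1 X₁ D)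
    (hX₃ : ContDiffOn ℝ 1 X₃ D) (hb : ContinuousOn b D) (hK : EqOn (quadrature K₀ X₁ X₃) K D)
    (hcurl : ∀ p ∈ D, DifferentiableAt ℝ K p → d1 K p = X₁ p →
      d3 X₁ p - d1 X₃ p = b p * (d3 K p - X₃ p)) :
    ∀ p ∈ D, HasDerivAt (fun t => K (t, p.2)) (X₁ p) p.1 ∧
      HasDerivAt (fun t => K (p.1, t)) (X₃ p) p.2 := by
  have hK_nhds {q : ℝ × ℝ} (hq : q ∈ D) : quadrature K₀ X₁ X₃ =ᶠ[𝓝 q] K :=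
    hK.eventuallyEq_of_mem (hD.isOpen.mem_nhds hq)
  have hdiff {q : ℝ × ℝ} (hq : q ∈ D) : DifferentiableAt ℝ K q :=
    (differentiableAt_quadrature hD hX₁ hX₃.continuousOn hq).congr_of_eventuallyEq (hK_nhds hq).symm
  have hd1 {q : ℝ × ℝ} (hq : q ∈ D) : d1 K q = X₁ q := by
    rw [← d1_quadrature hD hX₁ hX₃.continuousOn hq, d1, d1, (hK_nhds hq).fderiv_eq]
  have hd3 {q : ℝ × ℝ} (hq : q ∈ D) : d3 (quadrature K₀ X₁ X₃) q = d3 K q := by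
    rw [d3, d3, (hK_nhds hq).fderiv_eq]
  intro p hp
  have hd3p : d3 K p = X₃ p := (hd3 hp).symm.trans <|
    d3_quadrature_eq_of_curl_eq hD hX₁ hX₃ hb
      (fun q hq => by rw [hd3 hq, hcurl q hq (hdiff hq) (hd1 hq)]) hp
  exact ⟨hd1 hp ▸ hasDerivAt_d1 (hdiff hp), hd3p ▸ hasDerivAt_d3 (hdiff hp)⟩

end Quadrature

section GradientSystem

variable {f a b K : ℝ × ℝ → ℝ} {D : Set (ℝ × ℝ)} {K₀ : ℝ} {p : ℝ × ℝ} {n : WithTop ℕ∞}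

/-- First component of the solution `(X₁, X₃)` of the linear system
`∂₁f X₁ - ∂₃f X₃ = a`, `∂₃f X₁ + ∂₁f X₃ = b`. -/
noncomputable def gradSolve₁ (f a b : ℝ × ℝ → ℝ) : ℝ × ℝ → ℝ :=
  fun p => (normSqGrad f p)⁻¹ * (d1 f p * a p + d3 f p * b p)

/-- Second component of the solution `(X₁, X₃)` of the linear system
`∂₁f X₁ - ∂₃f X₃ = a`, `∂₃f X₁ + ∂₁f X₃ = b`. -/
noncomputable def gradSolve₃ (f a b : ℝ × ℝ → ℝ) : ℝ × ℝ → ℝ :=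
  fun p => (normSqGrad f p)⁻¹ * (-(d3 f p) * a p + d1 f p * b p)

lemma d1_mul_gradSolve₁_sub (h : normSqGrad f p ≠ 0) :
    d1 f p * gradSolve₁ f a b p - d3 f p * gradSolve₃ f a b p = a p := by
  have hsq : normSqGrad f p = d1 f p ^ 2 + d3 f p ^ 2 := rfl
  simp only [gradSolve₁, gradSolve₃]
  field_simp
  rw [hsq]
  ring

lemma d3_mul_gradSolve₁_add (h : normSqGrad f p ≠ 0) :
    d3 f p * gradSolve₁ f a b p + d1 f p * gradSolve₃ f a b p = b p := by
  have hsq : normSqGrad f p = d1 f p ^ 2 + d3 f p ^ 2 := rfl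
  simp only [gradSolve₁, gradSolve₃]
  field_simp
  rw [hsq]
  ring

lemma contDiffAt_normSqGrad (hf : ContDiffAt ℝ (n + 1) f p) : ContDiffAt ℝ n (normSqGrad f) p :=
  ((contDiffAt_d1 hf le_rfl).pow 2).add ((contDiffAt_d3 hf le_rfl).pow 2)

lemma contDiffAt_gradSolve₁ (hf : ContDiffAt ℝ (n + 1) f p) (ha : ContDiffAt ℝ n a p)
    (hb : ContDiffAt ℝ n b p) (h : normSqGrad f p ≠ 0) : ContDiffAt ℝ n (gradSolve₁ f a b) p :=
  ((contDiffAt_normSqGrad hf).inv h).mul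
    (((contDiffAt_d1 hf le_rfl).mul ha).add ((contDiffAt_d3 hf le_rfl).mul hb))

lemma contDiffAt_gradSolve₃ (hf : ContDiffAt ℝ (n + 1) f p) (ha : ContDiffAt ℝ n a p)
    (hb : ContDiffAt ℝ n b p) (h : normSqGrad f p ≠ 0) : ContDiffAt ℝ n (gradSolve₃ f a b) p :=
  ((contDiffAt_normSqGrad hf).inv h).mul
    (((contDiffAt_d3 hf le_rfl).neg.mul ha).add ((contDiffAt_d1 hf le_rfl).mul hb))

lemma continuousAt_lap (hf : ContDiffAt ℝ 2 f p) : ContinuousAt (lap f) p :=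
  (contDiffAt_d1 (m := 0) (contDiffAt_d1 (m := 1) hf (by norm_num)) (by norm_num)).continuousAt.add
    (contDiffAt_d3 (m := 0) (contDiffAt_d3 (m := 1) hf (by norm_num)) (by norm_num)).continuousAt

lemma traceFreeDiv_eq_lap_mul_add_curl (hf : ContDiffAt ℝ 2 f p) (ha : ContDiffAt ℝ 1 a p)
    (hb : ContDiffAt ℝ 1 b p) (h : normSqGrad f p ≠ 0) :
    traceFreeDiv a b (d3 f p, -d1 f p) p =
      lap f p * (d3 f p * gradSolve₁ f a b p - d1 f p * gradSolve₃ f a b p)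
        + normSqGrad f p * (d3 (gradSolve₁ f a b) p - d1 (gradSolve₃ f a b) p) := by
  have hne : ∀ᶠ q in 𝓝 p, normSqGrad f q ≠ 0 :=
    (contDiffAt_normSqGrad (n := 1) hf).continuousAt.eventually_ne h
  rw [traceFreeDiv_congr
      (a₂ := d1 f * gradSolve₁ f a b - d3 f * gradSolve₃ f a b)
      (b₂ := d3 f * gradSolve₁ f a b + d1 f * gradSolve₃ f a b)
      (hne.mono fun q hq => (d1_mul_gradSolve₁_sub hq).symm)
      (hne.mono fun q hq => (d3_mul_gradSolve₁_add hq).symm),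
    traceFreeDiv_gradient_rotation hf
      ((contDiffAt_gradSolve₁ hf ha hb h).differentiableAt one_ne_zero)
      ((contDiffAt_gradSolve₃ hf ha hb h).differentiableAt one_ne_zero),
    fderiv_apply_eq_d1_d3, normSqGrad]
  ring

theorem hasDerivAt_of_eqOn_quadrature_gradSolve (hD : IsQuadratureDomain D)
    (hf : ∀ p ∈ D, ContDiffAt ℝ 2 f p) (ha : ∀ p ∈ D, ContDiffAt ℝ 1 a p)
    (hb : ∀ p ∈ D, ContDiffAt ℝ 1 b p) (hne : ∀ p ∈ D, normSqGrad f p ≠ 0)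
    (hK : EqOn (quadrature K₀ (gradSolve₁ f a b) (gradSolve₃ f a b)) K D)
    (hdiv : ∀ p ∈ D, DifferentiableAt ℝ K p → traceFreeDiv a b (d3 f p, -d1 f p) p =
      lap f p * fderiv ℝ K p (d3 f p, -d1 f p)) :
    ∀ p ∈ D, HasDerivAt (fun t => K (t, p.2)) (gradSolve₁ f a b p) p.1 ∧
      HasDerivAt (fun t => K (p.1, t)) (gradSolve₃ f a b p) p.2 := by
  refine hasDerivAt_of_eqOn_quadrature (b := fun q => -(lap f q * d1 f q) / normSqGrad f q) hD
    (fun q hq => ?_) (fun q hq => ?_) (fun q hq => ?_) hK fun q hq hKq hd1 => ?_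
  · exact (contDiffAt_gradSolve₁ (hf q hq) (ha q hq) (hb q hq) (hne q hq)).contDiffWithinAt
  · exact (contDiffAt_gradSolve₃ (hf q hq) (ha q hq) (hb q hq) (hne q hq)).contDiffWithinAt
  · exact (((continuousAt_lap (hf q hq)).mul
      (contDiffAt_d1 (m := 1) (hf q hq) (by norm_num)).continuousAt).neg.div
      (contDiffAt_normSqGrad (n := 1) (hf q hq)).continuousAt (hne q hq)).continuousWithinAt
  · have hcurl := traceFreeDiv_eq_lap_mul_add_curl (hf q hq) (ha q hq) (hb q hq) (hne q hq)
    rw [hdiv q hq hKq, fderiv_apply_eq_d1_d3, hd1] at hcurl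
    rw [div_mul_eq_mul_div, eq_div_iff (hne q hq)]
    linear_combination -hcurl

end GradientSystem

section FieldEquations

variable {c κ : ℝ} {F A Pt K ε P Ω : ℝ × ℝ → ℝ} {p v : ℝ × ℝ}

/-- The coefficient of the twist terms in (Ya) and (Yb). -/
noncomputable def twistWeight (F Pt : ℝ × ℝ → ℝ) : ℝ × ℝ → ℝ :=
  fun p => exp (4 * F p) / (4 * Pt p)

/-- The right-hand side of (Ya). -/
noncomputable def rhsYa (F A Pt : ℝ × ℝ → ℝ) : ℝ × ℝ → ℝ := fun p =>
  (1 / 2) * (d1 (d1 Pt) p - d3 (d3 Pt) p) + Pt p * (d1 F p ^ 2 - d3 F p ^ 2)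
    - (exp (4 * F p) / (4 * Pt p)) * (d1 A p ^ 2 - d3 A p ^ 2)

/-- The right-hand side of (Yb). -/
noncomputable def rhsYb (F A Pt : ℝ × ℝ → ℝ) : ℝ × ℝ → ℝ := fun p =>
  d1 (d3 Pt) p + 2 * Pt p * d1 F p * d3 F p
    - (exp (4 * F p) / (2 * Pt p)) * (d1 A p * d3 A p)

/-- `e^{2G}` for rigid rotation with the constant angular velocity `ω`. -/
noncomputable def redshiftSq (c ω : ℝ) (F A Pt : ℝ × ℝ → ℝ) : ℝ × ℝ → ℝ := fun p =>
  exp (2 * F p) * (1 + ω * A p / c) ^ 2 - exp (-(2 * F p)) * (ω ^ 2 / c ^ 2) * Pt p ^ 2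

/-- The reduced field equations (N.9a), (N.9b), (N.9c) at the point `p`. -/
structure IsReducedSolutionAt (c κ : ℝ) (F A Pt K ε P Ω : ℝ × ℝ → ℝ) (p : ℝ × ℝ) : Prop where
  eqF : d1 (d1 F) p + d3 (d3 F) p + (1 / Pt p) * (d1 Pt p * d1 F p + d3 Pt p * d3 F p)
      + (exp (4 * F p) / (2 * Pt p ^ 2)) * (d1 A p ^ 2 + d3 A p ^ 2)
    = (κ / 2) * exp (2 * (-F p + K p)) *
        ((ε p + P p) * (exp (2 * F p) * (1 + Ω p * A p / c) ^ 2
          + exp (-(2 * F p)) * (Ω p ^ 2 / c ^ 2) * Pt p ^ 2) / redshiftSq c (Ω p) F A Pt p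
          + 2 * P p)
  eqA : d1 (d1 A) p + d3 (d3 A) p - (1 / Pt p) * (d1 Pt p * d1 A p + d3 Pt p * d3 A p)
      + 4 * (d1 F p * d1 A p + d3 F p * d3 A p)
    = -(2 * κ) * exp (2 * (-F p + K p)) * (ε p + P p) *
        (exp (-(2 * F p)) * (Ω p / c) * Pt p ^ 2 * (1 + Ω p * A p / c))
          / redshiftSq c (Ω p) F A Pt p
  eqPt : d1 (d1 Pt) p + d3 (d3 Pt) p = 2 * κ * exp (2 * (-F p + K p)) * P p * Pt p

/-- The Euler equation `dP = -(ε + P) dG` at the point `p`, multiplied by `2 e^{2G}`; the angular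
velocity is kept equal to `Ω p` when `G` is differentiated. -/
def EulerEquationAt (c : ℝ) (F A Pt ε P Ω : ℝ × ℝ → ℝ) (p : ℝ × ℝ) : Prop :=
  ∀ v, 2 * redshiftSq c (Ω p) F A Pt p * fderiv ℝ P p v =
    -(ε p + P p) * fderiv ℝ (redshiftSq c (Ω p) F A Pt) p v

lemma rhsYa_eq : rhsYa F A Pt =
    (1 / 2 : ℝ) • (d1 (d1 Pt) - d3 (d3 Pt)) + stressDiag Pt F - stressDiag (twistWeight F Pt) A :=
  rfl

lemma rhsYb_eq :
    rhsYb F A Pt = d1 (d3 Pt) + stressOff Pt F - stressOff (twistWeight F Pt) A := by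
  funext p
  simp only [rhsYb, stressOff, twistWeight, Pi.add_apply, Pi.sub_apply]
  ring

lemma contDiffAt_rhsYa (hF : ContDiffAt ℝ 2 F p) (hA : ContDiffAt ℝ 2 A p)
    (hPt : ContDiffAt ℝ 3 Pt p) (hne : Pt p ≠ 0) : ContDiffAt ℝ 1 (rhsYa F A Pt) p := by
  have hF₀ : ContDiffAt ℝ 1 F p := hF.of_le one_le_two
  have hPt₀ : ContDiffAt ℝ 1 Pt p := hPt.of_le (by norm_num)
  have hF₁ : ContDiffAt ℝ 1 (d1 F) p := contDiffAt_d1 hF (by norm_num)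
  have hF₃ : ContDiffAt ℝ 1 (d3 F) p := contDiffAt_d3 hF (by norm_num)
  have hA₁ : ContDiffAt ℝ 1 (d1 A) p := contDiffAt_d1 hA (by norm_num)
  have hA₃ : ContDiffAt ℝ 1 (d3 A) p := contDiffAt_d3 hA (by norm_num)
  have hPt₁₁ : ContDiffAt ℝ 1 (d1 (d1 Pt)) p :=
    contDiffAt_d1 (contDiffAt_d1 (m := 2) hPt (by norm_num)) (by norm_num)
  have hPt₃₃ : ContDiffAt ℝ 1 (d3 (d3 Pt)) p :=
    contDiffAt_d3 (contDiffAt_d3 (m := 2) hPt (by norm_num)) (by norm_num)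
  exact ((contDiffAt_const.mul (hPt₁₁.sub hPt₃₃)).add
    (hPt₀.mul ((hF₁.pow 2).sub (hF₃.pow 2)))).sub
    (((contDiffAt_const.mul hF₀).exp.div (contDiffAt_const.mul hPt₀)
      (mul_ne_zero four_ne_zero hne)).mul ((hA₁.pow 2).sub (hA₃.pow 2)))

lemma contDiffAt_rhsYb (hF : ContDiffAt ℝ 2 F p) (hA : ContDiffAt ℝ 2 A p)
    (hPt : ContDiffAt ℝ 3 Pt p) (hne : Pt p ≠ 0) : ContDiffAt ℝ 1 (rhsYb F A Pt) p := by
  have hF₀ : ContDiffAt ℝ 1 F p := hF.of_le one_le_two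
  have hPt₀ : ContDiffAt ℝ 1 Pt p := hPt.of_le (by norm_num)
  have hPt₁₃ : ContDiffAt ℝ 1 (d1 (d3 Pt)) p :=
    contDiffAt_d1 (contDiffAt_d3 (m := 2) hPt (by norm_num)) (by norm_num)
  exact (hPt₁₃.add (((contDiffAt_const.mul hPt₀).mul (contDiffAt_d1 hF (by norm_num))).mul
    (contDiffAt_d3 hF (by norm_num)))).sub
    (((contDiffAt_const.mul hF₀).exp.div (contDiffAt_const.mul hPt₀)
      (mul_ne_zero two_ne_zero hne)).mul
      ((contDiffAt_d1 hA (by norm_num)).mul (contDiffAt_d3 hA (by norm_num))))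

lemma differentiableAt_twistWeight (hF : DifferentiableAt ℝ F p) (hPt : DifferentiableAt ℝ Pt p)
    (hne : Pt p ≠ 0) : DifferentiableAt ℝ (twistWeight F Pt) p :=
  (hF.const_mul 4).exp.mul ((hPt.const_mul 4).inv (mul_ne_zero four_ne_zero hne))

lemma fderiv_twistWeight (hF : DifferentiableAt ℝ F p) (hPt : DifferentiableAt ℝ Pt p)
    (hne : Pt p ≠ 0) : fderiv ℝ (twistWeight F Pt) p v =
      twistWeight F Pt p * (4 * fderiv ℝ F p v - fderiv ℝ Pt p v / Pt p) := by
  have h : HasFDerivAt (twistWeight F Pt) _ p := (hF.hasFDerivAt.const_mul 4).exp.mul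
    ((hasDerivAt_inv (mul_ne_zero four_ne_zero hne)).comp_hasFDerivAt p
      (hPt.hasFDerivAt.const_mul 4))
  rw [h.fderiv, twistWeight]
  simp only [neg_smul, smul_neg, mul_inv_rev, add_apply, neg_apply, smul_apply, smul_eq_mul]
  field_simp
  ring

lemma fderiv_redshiftSq {ω : ℝ} (hF : DifferentiableAt ℝ F p) (hA : DifferentiableAt ℝ A p)
    (hPt : DifferentiableAt ℝ Pt p) : fderiv ℝ (redshiftSq c ω F A Pt) p v =
      2 * fderiv ℝ F p v * (exp (2 * F p) * (1 + ω * A p / c) ^ 2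
          + exp (-(2 * F p)) * (ω ^ 2 / c ^ 2) * Pt p ^ 2)
        + 2 * fderiv ℝ A p v * (exp (2 * F p) * (ω / c) * (1 + ω * A p / c))
        - 2 * fderiv ℝ Pt p v * (exp (-(2 * F p)) * (ω ^ 2 / c ^ 2) * Pt p) := by
  have hF' := hF.hasFDerivAt.const_mul 2
  have h : HasFDerivAt (redshiftSq c ω F A Pt) _ p :=
    (hF'.exp.mul ((((hA.hasFDerivAt.const_mul ω).mul_const c⁻¹).const_add 1).pow 2)).sub
      ((hF'.neg.exp.mul_const (ω ^ 2 / c ^ 2)).mul (hPt.hasFDerivAt.pow 2))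
  rw [h.fderiv]
  simp only [Nat.add_one_sub_one, pow_one, smul_add, nsmul_eq_mul, Nat.cast_ofNat, mul_one,
    Pi.neg_apply, smul_neg, sub_apply, add_apply, smul_apply, smul_eq_mul, neg_apply]
  ring

lemma traceFreeDiv_rhs (hF : ContDiffAt ℝ 2 F p) (hA : ContDiffAt ℝ 2 A p)
    (hPt : ContDiffAt ℝ 3 Pt p) (hne : Pt p ≠ 0) :
    traceFreeDiv (rhsYa F A Pt) (rhsYb F A Pt) v p = 1 / 2 * fderiv ℝ (lap Pt) p v
      + (2 * fderiv ℝ F p v * divGrad Pt F p - fderiv ℝ Pt p v * normSqGrad F p)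
      - (2 * fderiv ℝ A p v * divGrad (twistWeight F Pt) A p
        - fderiv ℝ (twistWeight F Pt) p v * normSqGrad A p) := by
  have hPt' := hPt.differentiableAt (by norm_num)
  have hw := differentiableAt_twistWeight (hF.differentiableAt two_ne_zero) hPt' hne
  have hPt₁ : ContDiffAt ℝ 2 (d1 Pt) p := contDiffAt_d1 hPt (by norm_num)
  have hPt₃ : ContDiffAt ℝ 2 (d3 Pt) p := contDiffAt_d3 hPt (by norm_num)
  have hdiag := ((differentiableAt_d1 hPt₁).sub (differentiableAt_d3 hPt₃)).const_smul (1 / 2 : ℝ)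
  have hoff := differentiableAt_d1 hPt₃
  have hdiagF := differentiableAt_stressDiag hPt' hF
  have hoffF := differentiableAt_stressOff hPt' hF
  rw [rhsYa_eq, rhsYb_eq, traceFreeDiv_sub (hdiag.add hdiagF) (hoff.add hoffF)
      (differentiableAt_stressDiag hw hA) (differentiableAt_stressOff hw hA),
    traceFreeDiv_add hdiag hoff hdiagF hoffF, traceFreeDiv_hessian hPt, traceFreeDiv_stress hPt' hF,
    traceFreeDiv_stress hw hA]

namespace IsReducedSolutionAt

lemma divGrad_Pt_F (h : IsReducedSolutionAt c κ F A Pt K ε P Ω p) (hne : Pt p ≠ 0) :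
    divGrad Pt F p = -(2 * twistWeight F Pt p) * normSqGrad A p
      + Pt p * ((κ / 2) * exp (2 * (-F p + K p)) *
        ((ε p + P p) * (exp (2 * F p) * (1 + Ω p * A p / c) ^ 2
          + exp (-(2 * F p)) * (Ω p ^ 2 / c ^ 2) * Pt p ^ 2) / redshiftSq c (Ω p) F A Pt p
          + 2 * P p)) := by
  rw [← h.eqF, divGrad, lap, twistWeight, normSqGrad]
  field_simp
  ring

lemma divGrad_twistWeight_A (h : IsReducedSolutionAt c κ F A Pt K ε P Ω p)
    (hF : DifferentiableAt ℝ F p) (hPt : DifferentiableAt ℝ Pt p) (hne : Pt p ≠ 0) :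
    divGrad (twistWeight F Pt) A p = twistWeight F Pt p *
      (-(2 * κ) * exp (2 * (-F p + K p)) * (ε p + P p) *
        (exp (-(2 * F p)) * (Ω p / c) * Pt p ^ 2 * (1 + Ω p * A p / c))
          / redshiftSq c (Ω p) F A Pt p) := by
  have hw₁ : d1 (twistWeight F Pt) p = twistWeight F Pt p * (4 * d1 F p - d1 Pt p / Pt p) :=
    fderiv_twistWeight hF hPt hne
  have hw₃ : d3 (twistWeight F Pt) p = twistWeight F Pt p * (4 * d3 F p - d3 Pt p / Pt p) :=
    fderiv_twistWeight hF hPt hne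
  rw [← h.eqA, divGrad, lap, hw₁, hw₃]
  ring

lemma fderiv_lap_Pt (h : ∀ᶠ q in 𝓝 p, IsReducedSolutionAt c κ F A Pt K ε P Ω q)
    (hF : DifferentiableAt ℝ F p) (hPt : DifferentiableAt ℝ Pt p) (hK : DifferentiableAt ℝ K p)
    (hP : DifferentiableAt ℝ P p) : fderiv ℝ (lap Pt) p v =
      2 * κ * exp (2 * (-F p + K p)) * (2 * (fderiv ℝ K p v - fderiv ℝ F p v) * P p * Pt p
        + fderiv ℝ P p v * Pt p + P p * fderiv ℝ Pt p v) := by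
  have hsource : HasFDerivAt (fun q => 2 * κ * exp (2 * (-F q + K q)) * P q * Pt q) _ p :=
    ((((hF.hasFDerivAt.neg.add hK.hasFDerivAt).const_mul 2).exp.const_mul (2 * κ)).mul
      hP.hasFDerivAt).mul hPt.hasFDerivAt
  have hlap : HasFDerivAt (lap Pt) _ p :=
    hsource.congr_of_eventuallyEq (h.mono fun q hq => hq.eqPt)
  rw [hlap.fderiv]
  simp only [Pi.add_apply, Pi.neg_apply, Pi.mul_apply, smul_add, smul_neg, add_apply, smul_apply,
    smul_eq_mul, neg_apply]
  ring

theorem traceFreeDiv_rhs_eq_lap_mul (h : ∀ᶠ q in 𝓝 p, IsReducedSolutionAt c κ F A Pt K ε P Ω q)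
    (hF : ContDiffAt ℝ 2 F p) (hA : ContDiffAt ℝ 2 A p) (hPt : ContDiffAt ℝ 3 Pt p)
    (hK : DifferentiableAt ℝ K p) (hP : DifferentiableAt ℝ P p) (hne : Pt p ≠ 0)
    (hE : redshiftSq c (Ω p) F A Pt p ≠ 0) (hEuler : EulerEquationAt c F A Pt ε P Ω p)
    (hv : fderiv ℝ Pt p v = 0) :
    traceFreeDiv (rhsYa F A Pt) (rhsYb F A Pt) v p = lap Pt p * fderiv ℝ K p v := by
  have hp := h.self_of_nhds
  have hF' := hF.differentiableAt two_ne_zero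
  have hA' := hA.differentiableAt two_ne_zero
  have hPt' := hPt.differentiableAt (by norm_num)
  have hlap : lap Pt p = 2 * κ * exp (2 * (-F p + K p)) * P p * Pt p := hp.eqPt
  have hPv : fderiv ℝ P p v = -(ε p + P p) * fderiv ℝ (redshiftSq c (Ω p) F A Pt) p v
      / (2 * redshiftSq c (Ω p) F A Pt p) := by
    rw [eq_div_iff (mul_ne_zero two_ne_zero hE), mul_comm, hEuler v]
  have hexp : exp (4 * F p) * exp (-(2 * F p)) = exp (2 * F p) := by
    rw [← Real.exp_add]
    ring_nf
  rw [traceFreeDiv_rhs hF hA hPt hne, hp.divGrad_Pt_F hne, hp.divGrad_twistWeight_A hF' hPt' hne,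
    fderiv_lap_Pt h hF' hPt' hK hP, hPv, fderiv_redshiftSq hF' hA' hPt',
    fderiv_twistWeight hF' hPt' hne, hv, hlap, twistWeight, ← hexp]
  field_simp
  ring

end IsReducedSolutionAt

end FieldEquations

section Matter

variable {c : ℝ} {F A Pt ε ρ P Ω u : ℝ × ℝ → ℝ} {rf pf : ℝ → ℝ} {p : ℝ × ℝ}

lemma hasDerivAt_of_forall_nonpos_eq_zero {E : Type*} [NormedAddCommGroup E] [NormedSpace ℝ E]
    {g g' : ℝ → E} (hg : ContinuousAt g 0) (hg' : ContinuousAt g' 0) (hg₀ : ∀ s ≤ 0, g s = 0)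
    (hg'₀ : ∀ s ≤ 0, g' s = 0) (hpos : ∀ s > 0, HasDerivAt g (g' s) s) (s : ℝ) :
    HasDerivAt g (g' s) s := by
  have hneg {s : ℝ} (hs : s < 0) : HasDerivAt g (g' s) s := by
    rw [hg'₀ s hs.le]
    exact (hasDerivAt_const s 0).congr_of_eventuallyEq <|
      eventually_of_mem (Iio_mem_nhds hs) fun t ht => hg₀ t (le_of_lt ht)
  exact hasDerivAt_of_hasDerivAt_of_ne' (fun s hs => hs.lt_or_gt.elim hneg (hpos s)) hg hg' s

lemma eventually_eq_of_forall_connectedComponentIn {X Y : Type*} [TopologicalSpace X]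
    [LocallyConnectedSpace X] {U : Set X} {g : X → Y} {x : X} (hU : IsOpen U) (hx : x ∈ U)
    (hg : ∀ y ∈ connectedComponentIn U x, g y = g x) : ∀ᶠ y in 𝓝 x, g y = g x :=
  eventually_of_mem (hU.connectedComponentIn.mem_nhds (mem_connectedComponentIn hx)) hg

lemma eulerEquationAt_of_bernoulli {C : ℝ} (hc : c ≠ 0) (hu : DifferentiableAt ℝ u p)
    (hF : DifferentiableAt ℝ F p) (hA : DifferentiableAt ℝ A p) (hPt : DifferentiableAt ℝ Pt p)
    (hE : redshiftSq c (Ω p) F A Pt p ≠ 0) (hε : ε p = c ^ 2 * rf (u p))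
    (hP : P =ᶠ[𝓝 p] pf ∘ u) (hpf : HasDerivAt pf (rf (u p) + pf (u p) / c ^ 2) (u p))
    (hBern : ∀ᶠ q in 𝓝 p, u q / c ^ 2 + log (redshiftSq c (Ω p) F A Pt q) / 2 = C) :
    EulerEquationAt c F A Pt ε P Ω p := fun v => by
  have hdE : DifferentiableAt ℝ (redshiftSq c (Ω p) F A Pt) p := by
    unfold redshiftSq
    fun_prop
  have hdP : fderiv ℝ P p v = (rf (u p) + pf (u p) / c ^ 2) * fderiv ℝ u p v := by
    rw [hP.fderiv_eq, (hpf.comp_hasFDerivAt p hu.hasFDerivAt).fderiv]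
    rfl
  have hdB : fderiv ℝ u p v * (c ^ 2)⁻¹ + (redshiftSq c (Ω p) F A Pt p)⁻¹ *
      fderiv ℝ (redshiftSq c (Ω p) F A Pt) p v * 2⁻¹ = 0 := by
    have h : HasFDerivAt (fun q => u q / c ^ 2 + log (redshiftSq c (Ω p) F A Pt q) / 2) _ p :=
      (hu.hasFDerivAt.mul_const (c ^ 2)⁻¹).add ((hdE.hasFDerivAt.log hE).mul_const 2⁻¹)
    have h₀ := congrArg (· v) (h.unique ((hasFDerivAt_const C p).congr_of_eventuallyEq hBern))
    simpa [mul_comm, mul_left_comm, mul_assoc] using h₀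
  rw [hdP, hε, hP.self_of_nhds, Function.comp_apply]
  field_simp at hdB ⊢
  linear_combination (c ^ 2 * rf (u p) + pf (u p)) * hdB

lemma eulerEquationAt_of_fderiv_eq_zero (hP : fderiv ℝ P p = 0) (h₀ : ε p + P p = 0) :
    EulerEquationAt c F A Pt ε P Ω p := fun v => by
  simp [hP, h₀]

lemma eulerEquationAt_of_equationOfState {O : Set (ℝ × ℝ)} (hc : c ≠ 0) (hO : IsOpen O)
    (hu : DifferentiableOn ℝ u O) (hF : DifferentiableOn ℝ F O) (hA : DifferentiableOn ℝ A O)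
    (hPt : DifferentiableOn ℝ Pt O) (hE : ∀ q ∈ O, redshiftSq c (Ω q) F A Pt q ≠ 0)
    (hrf₀ : ∀ s ≤ 0, rf s = 0) (hpf₀ : ∀ s ≤ 0, pf s = 0)
    (hpf' : ∀ s, HasDerivAt pf (rf s + pf s / c ^ 2) s)
    (hρu : ∀ q ∈ O, ρ q = rf (u q)) (hPu : ∀ q ∈ O, P q = pf (u q))
    (hBern : ∀ q ∈ {x ∈ O | 0 < u x}, ∀ r ∈ connectedComponentIn {x ∈ O | 0 < u x} q,
      u r / c ^ 2 + log (redshiftSq c (Ω r) F A Pt r) / 2 =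
        u q / c ^ 2 + log (redshiftSq c (Ω q) F A Pt q) / 2)
    (hΩ : ∀ q ∈ O, 0 < u q → ∀ᶠ r in 𝓝 q, Ω r = Ω q) (hp : p ∈ O) :
    EulerEquationAt c F A Pt (fun q => c ^ 2 * ρ q) P Ω p := by
  have hO_nhds : O ∈ 𝓝 p := hO.mem_nhds hp
  have hup : DifferentiableAt ℝ u p := hu.differentiableAt hO_nhds
  have hP : P =ᶠ[𝓝 p] pf ∘ u := eventuallyEq_of_mem hO_nhds hPu
  rcases le_or_gt (u p) 0 with hvac | hpos
  · refine eulerEquationAt_of_fderiv_eq_zero ?_ ?_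
    · rw [hP.fderiv_eq, ((hpf' (u p)).comp_hasFDerivAt p hup.hasFDerivAt).fderiv, hrf₀ _ hvac,
        hpf₀ _ hvac, zero_div, add_zero, zero_smul]
    · rw [hρu p hp, hPu p hp, hrf₀ _ hvac, hpf₀ _ hvac, mul_zero, add_zero]
  · have hconst := eventually_eq_of_forall_connectedComponentIn
      (hu.continuousOn.isOpen_inter_preimage hO isOpen_Ioi) ⟨hp, hpos⟩ (hBern p ⟨hp, hpos⟩)
    refine eulerEquationAt_of_bernoulli (C := u p / c ^ 2 + log (redshiftSq c (Ω p) F A Pt p) / 2)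
      hc hup (hF.differentiableAt hO_nhds) (hA.differentiableAt hO_nhds)
      (hPt.differentiableAt hO_nhds) (hE p hp) (by rw [hρu p hp]) hP (hpf' _) ?_
    filter_upwards [hconst, hΩ p hp hpos] with q hq hΩq
    rwa [hΩq] at hq

end Matter

theorem stmt_6_general {c κ K₀ : ℝ} {F A Pt K ε P Ω : ℝ × ℝ → ℝ} {D : Set (ℝ × ℝ)}
    (hD : IsQuadratureDomain D) (hF : ContDiffOn ℝ 2 F D) (hA : ContDiffOn ℝ 2 A D)
    (hPt : ContDiffOn ℝ 3 Pt D) (hP : ∀ p ∈ D, DifferentiableAt ℝ P p) (hne : ∀ p ∈ D, Pt p ≠ 0)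
    (hE : ∀ p ∈ D, redshiftSq c (Ω p) F A Pt p ≠ 0) (hgrad : ∀ p ∈ D, normSqGrad Pt p ≠ 0)
    (hEuler : ∀ p ∈ D, EulerEquationAt c F A Pt ε P Ω p)
    (hfield : ∀ p ∈ D, IsReducedSolutionAt c κ F A Pt K ε P Ω p)
    (hK : EqOn (quadrature K₀ (gradSolve₁ Pt (rhsYa F A Pt) (rhsYb F A Pt))
      (gradSolve₃ Pt (rhsYa F A Pt) (rhsYb F A Pt))) K D) :
    ∀ p ∈ D,
      HasDerivAt (fun t => K (t, p.2)) (gradSolve₁ Pt (rhsYa F A Pt) (rhsYb F A Pt) p) p.1 ∧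
      HasDerivAt (fun t => K (p.1, t)) (gradSolve₃ Pt (rhsYa F A Pt) (rhsYb F A Pt) p) p.2 := by
  have hnhds {p : ℝ × ℝ} (hp : p ∈ D) : D ∈ 𝓝 p := hD.isOpen.mem_nhds hp
  have hF' (p) (hp : p ∈ D) : ContDiffAt ℝ 2 F p := hF.contDiffAt (hnhds hp)
  have hA' (p) (hp : p ∈ D) : ContDiffAt ℝ 2 A p := hA.contDiffAt (hnhds hp)
  have hPt' (p) (hp : p ∈ D) : ContDiffAt ℝ 3 Pt p := hPt.contDiffAt (hnhds hp)
  refine hasDerivAt_of_eqOn_quadrature_gradSolve hD (fun p hp => (hPt' p hp).of_le (by norm_num))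
    (fun p hp => contDiffAt_rhsYa (hF' p hp) (hA' p hp) (hPt' p hp) (hne p hp))
    (fun p hp => contDiffAt_rhsYb (hF' p hp) (hA' p hp) (hPt' p hp) (hne p hp)) hgrad hK
    fun p hp hKp => ?_
  refine IsReducedSolutionAt.traceFreeDiv_rhs_eq_lap_mul (eventually_of_mem (hnhds hp) hfield)
    (hF' p hp) (hA' p hp) (hPt' p hp) hKp (hP p hp) (hne p hp) (hE p hp) (hEuler p hp) ?_
  rw [fderiv_apply_eq_d1_d3]
  ring

/-- **Theorem 2 of the paper (consistency).**
On the disc `D = {ϖ² + z² < R²}`, with `Ω` constant on `{r ≤ R₀}`, `u ≤ 0` on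
`{r ≥ R₁}` (`0 < R₁ < R₀ < R`), condition (C) on `D̄`, the equation-of-state/Euler
hypotheses, and `F, A, Pt, u` satisfying (N.9a)(N.9b)(N.9c) with the given continuous `K`:
if the quadrature `K̃` built from the right-hand sides of (Ya),(Yb) coincides with `K`
on `D`, then `∂₁K = K̃₁` and `∂₃K = K̃₃` on `D`, i.e. (Ya),(Yb) hold on `D`. -/
theorem stmt_6
    (c κ R₁ R₀ R : ℝ) (hc : 0 < c) (hκ : 0 < κ)
    (hR₁ : 0 < R₁) (hR₁R₀ : R₁ < R₀) (hR₀R : R₀ < R)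
    (Dset Dcl : Set (ℝ × ℝ))
    (hDset : Dset = {p : ℝ × ℝ | p.1 ^ 2 + p.2 ^ 2 < R ^ 2})
    (hDcl : Dcl = {p : ℝ × ℝ | p.1 ^ 2 + p.2 ^ 2 ≤ R ^ 2})
    (O : Set (ℝ × ℝ)) (hO : IsOpen O) (hDclO : Dcl ⊆ O)
    (F A Pt K ρ P Ω u : ℝ × ℝ → ℝ)
    (hF : ContDiffOn ℝ 2 F O) (hA : ContDiffOn ℝ 2 A O)
    (hPt : ContDiffOn ℝ 3 Pt O) (hu : ContDiffOn ℝ 2 u O)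
    (hKcont : ContinuousOn K Dcl)
    (hPtne : ∀ p ∈ O, Pt p ≠ 0)
    (hρc : ContinuousOn ρ O) (hPc : ContinuousOn P O) (hΩc : ContinuousOn Ω O)
    (hρ0 : ∀ p ∈ O, 0 ≤ ρ p) (hP0 : ∀ p ∈ O, 0 ≤ P p)
    (ε E : ℝ × ℝ → ℝ)
    (hε : ε = fun p => c ^ 2 * ρ p)
    (hE : E = fun p => exp (2 * F p) * (1 + Ω p * A p / c) ^ 2
      - exp (-(2 * F p)) * (Ω p ^ 2 / c ^ 2) * (Pt p) ^ 2)
    (hEpos : ∀ p ∈ O, 0 < E p)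
    (rf pf : ℝ → ℝ) (hrfc : Continuous rf) (hpfc : Continuous pf)
    (hrf0 : ∀ s ≤ (0:ℝ), rf s = 0) (hpf0 : ∀ s ≤ (0:ℝ), pf s = 0)
    (hpf' : ∀ s > (0:ℝ), HasDerivAt pf (rf s + pf s / c ^ 2) s)
    (hρu : ∀ p ∈ O, ρ p = rf (u p)) (hPu : ∀ p ∈ O, P p = pf (u p))
    (G : ℝ × ℝ → ℝ) (hG : G = fun p => Real.log (E p) / 2)
    (hBern : ∀ p ∈ {x ∈ O | 0 < u x}, ∀ q ∈ connectedComponentIn {x ∈ O | 0 < u x} p,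
      u q / c ^ 2 + G q = u p / c ^ 2 + G p)
    (hΩconst : ∃ Ωc : ℝ, ∀ p : ℝ × ℝ, p.1 ^ 2 + p.2 ^ 2 ≤ R₀ ^ 2 → Ω p = Ωc)
    (hvac : ∀ p ∈ O, R₁ ^ 2 ≤ p.1 ^ 2 + p.2 ^ 2 → u p ≤ 0)
    (hC : ∀ p ∈ Dcl, (d1 Pt p) ^ 2 + (d3 Pt p) ^ 2 ≠ 0)
    (hN9a : ∀ p ∈ O,
      d1 (d1 F) p + d3 (d3 F) p
        + (1 / Pt p) * (d1 Pt p * d1 F p + d3 Pt p * d3 F p)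
        + (exp (4 * F p) / (2 * (Pt p) ^ 2)) * ((d1 A p) ^ 2 + (d3 A p) ^ 2)
      = (κ / 2) * exp (2 * (-F p + K p)) *
          ((ε p + P p) * (exp (2 * F p) * (1 + Ω p * A p / c) ^ 2
            + exp (-(2 * F p)) * (Ω p ^ 2 / c ^ 2) * (Pt p) ^ 2) / E p + 2 * P p))
    (hN9b : ∀ p ∈ O,
      d1 (d1 A) p + d3 (d3 A) p
        - (1 / Pt p) * (d1 Pt p * d1 A p + d3 Pt p * d3 A p)
        + 4 * (d1 F p * d1 A p + d3 F p * d3 A p)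
      = -(2 * κ) * exp (2 * (-F p + K p)) * (ε p + P p) *
          (exp (-(2 * F p)) * (Ω p / c) * (Pt p) ^ 2 * (1 + Ω p * A p / c)) / E p)
    (hN9c : ∀ p ∈ O,
      d1 (d1 Pt) p + d3 (d3 Pt) p
      = 2 * κ * exp (2 * (-F p + K p)) * P p * Pt p)
    (D₀ RHYa RHYb Kt1 Kt3 : ℝ × ℝ → ℝ)
    (hD₀ : D₀ = fun p => (d1 Pt p) ^ 2 + (d3 Pt p) ^ 2)
    (hRHYa : RHYa = fun p =>
      (1/2) * (d1 (d1 Pt) p - d3 (d3 Pt) p)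
        + Pt p * ((d1 F p) ^ 2 - (d3 F p) ^ 2)
        - (exp (4 * F p) / (4 * Pt p)) * ((d1 A p) ^ 2 - (d3 A p) ^ 2))
    (hRHYb : RHYb = fun p =>
      d1 (d3 Pt) p + 2 * Pt p * d1 F p * d3 F p
        - (exp (4 * F p) / (2 * Pt p)) * (d1 A p * d3 A p))
    (hKt1 : Kt1 = fun p => (D₀ p)⁻¹ * (d1 Pt p * RHYa p + d3 Pt p * RHYb p))
    (hKt3 : Kt3 = fun p => (D₀ p)⁻¹ * (-(d3 Pt p) * RHYa p + d1 Pt p * RHYb p))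
    (KO : ℝ) (Ktilde : ℝ × ℝ → ℝ)
    (hKtilde : ∀ p : ℝ × ℝ, Ktilde p =
      KO + (∫ t in (0:ℝ)..p.2, Kt3 (0, t)) + ∫ t in (0:ℝ)..p.1, Kt1 (t, p.2))
    (hfix : ∀ p ∈ Dset, Ktilde p = K p) :
    ∀ p ∈ Dset,
      HasDerivAt (fun t => K (t, p.2)) (Kt1 p) p.1 ∧
      HasDerivAt (fun t => K (p.1, t)) (Kt3 p) p.2 := by
  subst hDset hDcl hε hE hG hD₀ hRHYa hRHYb hKt1 hKt3
  obtain ⟨Ωc, hΩ⟩ := hΩconst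
  have hDDcl : {p : ℝ × ℝ | p.1 ^ 2 + p.2 ^ 2 < R ^ 2} ⊆ {p | p.1 ^ 2 + p.2 ^ 2 ≤ R ^ 2} :=
    ofPred_subset_ofPred_of_imp fun _ => le_of_lt
  have hDO := hDDcl.trans hDclO
  have hpf : ∀ s, HasDerivAt pf (rf s + pf s / c ^ 2) s :=
    hasDerivAt_of_forall_nonpos_eq_zero hpfc.continuousAt (by fun_prop) hpf0
      (fun s hs => by rw [hrf0 s hs, hpf0 s hs, zero_div, add_zero]) hpf'
  have hu' : DifferentiableOn ℝ u O := hu.differentiableOn two_ne_zero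
  have hP : DifferentiableOn ℝ P O :=
    (Differentiable.comp_differentiableOn (fun s => (hpf s).differentiableAt) hu').congr hPu
  have hrigid (p) (hp : p ∈ O) (hup : 0 < u p) : ∀ᶠ q in 𝓝 p, Ω q = Ω p := by
    have hpR₀ : p.1 ^ 2 + p.2 ^ 2 < R₀ ^ 2 := (not_le.1 fun h => hup.not_ge (hvac p hp h)).trans
      (pow_lt_pow_left₀ hR₁R₀ hR₁.le two_ne_zero)
    filter_upwards [(isQuadratureDomain_disc R₀).isOpen.mem_nhds hpR₀] with q (hq : _ < _)
    rw [hΩ q hq.le, hΩ p hpR₀.le]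
  exact stmt_6_general (isQuadratureDomain_disc R) (hF.mono hDO) (hA.mono hDO) (hPt.mono hDO)
    (fun p hp => hP.differentiableAt (hO.mem_nhds (hDO hp))) (fun p hp => hPtne p (hDO hp))
    (fun p hp => (hEpos p (hDO hp)).ne') (fun p hp => hC p (hDDcl hp))
    (fun p hp => eulerEquationAt_of_equationOfState hc.ne' hO hu' (hF.differentiableOn two_ne_zero)
      (hA.differentiableOn two_ne_zero) (hPt.differentiableOn three_ne_zero)
      (fun q hq => (hEpos q hq).ne') hrf0 hpf0 hpf hρu hPu hBern hrigid (hDO hp))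
    (fun p hp => ⟨hN9a p (hDO hp), hN9b p (hDO hp), hN9c p (hDO hp)⟩)
    fun p hp => (hKtilde p).symm.trans (hfix p hp)
end

section
/- (Pointwise Taylor estimate for the positive-part power, underlying the estimates on H_ρ(w).) Let ν > 1 and define g : ℝ → ℝ by g(u) = (max(u,0))^ν. Then for every a₀ > 0 there is a constant C ≥ 0, depending only on ν and a₀, such that for all a, h ∈ ℝ with |a| ≤ a₀ and |h| ≤ a₀: |g(a+h) − g(a) − ν·(max(a,0))^{ν−1}·h| ≤ C·|h|^{min(ν,2)}. -/
/-!
The derivative `ν u₊^(ν-1)` of `u₊^ν` is Hölder continuous of exponent `min (ν - 1) 1` on bounded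
sets: for `ν ≤ 2` because `t ↦ t^(ν-1)` is subadditive, for `ν ≥ 2` because it is `C¹`.
By the mean value inequality, a function whose derivative is Hölder of exponent `r` has a
first-order Taylor remainder of order `r + 1`, here `min ν 2`.
-/

open Set
open scoped NNReal

theorem holderOnWith_const_smul {M X Y : Type*} [PseudoMetricSpace X] [SeminormedAddCommGroup Y]
    [SeminormedAddCommGroup M] [SMulZeroClass M Y] [IsBoundedSMul M Y] {C r : ℝ≥0} {f : X → Y}
    {s : Set X} (c : M) (hf : HolderOnWith C r f s) :
    HolderOnWith (C * ‖c‖₊) r (fun x ↦ c • f x) s :=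
  (HolderWith.restrict_iff (f := fun x ↦ c • f x)).1 ((HolderWith.restrict_iff.2 hf).smul c)

section TaylorRemainder

variable {𝕜 E F : Type*} [RCLike 𝕜] [NormedAddCommGroup F] [NormedSpace 𝕜 F] {C r : ℝ≥0}

theorem norm_image_sub_le_of_holderOnWith_hasFDerivWithinAt
    [NormedAddCommGroup E] [NormedSpace 𝕜 E] [NormedSpace ℝ E]
    {f : E → F} {f' : E → E →L[𝕜] F} {s : Set E} {x y : E} (hs : Convex ℝ s)
    (hf : ∀ z ∈ s, HasFDerivWithinAt f (f' z) s z) (hf' : HolderOnWith C r f' s)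
    (hx : x ∈ s) (hy : y ∈ s) :
    ‖f y - f x - f' x (y - x)‖ ≤ C * ‖y - x‖ ^ (r + 1 : ℝ) := by
  have hseg : segment ℝ x y ⊆ s := hs.segment_subset hx hy
  have bound : ∀ z ∈ segment ℝ x y, ‖f' z - f' x‖ ≤ C * ‖y - x‖ ^ (r : ℝ) := fun z hz ↦ by
    rw [← dist_eq_norm]
    exact hf'.dist_le_of_le (hseg hz) hx
      ((dist_eq_norm z x).trans_le (norm_sub_le_of_mem_segment hz))
  calc ‖f y - f x - f' x (y - x)‖ ≤ C * ‖y - x‖ ^ (r : ℝ) * ‖y - x‖ :=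
        (convex_segment x y).norm_image_sub_le_of_norm_hasFDerivWithin_le'
          (fun z hz ↦ (hf z (hseg hz)).mono hseg) bound
          (left_mem_segment ℝ x y) (right_mem_segment ℝ x y)
    _ = C * ‖y - x‖ ^ (r + 1 : ℝ) := by
        rw [mul_assoc, Real.rpow_add_one' (norm_nonneg _) (by positivity)]

theorem norm_image_sub_le_of_holderOnWith_hasDerivWithinAt
    {f f' : 𝕜 → F} {s : Set 𝕜} {x y : 𝕜} (hs : Convex ℝ s)
    (hf : ∀ z ∈ s, HasDerivWithinAt f (f' z) s z) (hf' : HolderOnWith C r f' s)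
    (hx : x ∈ s) (hy : y ∈ s) :
    ‖f y - f x - (y - x) • f' x‖ ≤ C * ‖y - x‖ ^ (r + 1 : ℝ) := by
  have hholder : HolderOnWith C r (fun z ↦ ContinuousLinearMap.toSpanSingleton 𝕜 (f' z)) s :=
    fun z hz w hw ↦ ((ContinuousLinearMap.toSpanSingletonLIE 𝕜 F).isometry.edist_eq _ _).trans_le
      (hf' z hz w hw)
  exact norm_image_sub_le_of_holderOnWith_hasFDerivWithinAt hs
    (fun z hz ↦ (hf z hz).hasFDerivWithinAt) hholder hx hy

end TaylorRemainder

section Rpow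

theorem abs_rpow_sub_rpow_le {p x y : ℝ} (hp : 0 ≤ p) (hp' : p ≤ 1) (hx : 0 ≤ x) (hy : 0 ≤ y) :
    |x ^ p - y ^ p| ≤ |x - y| ^ p := by
  wlog hyx : y ≤ x generalizing x y
  · rw [abs_sub_comm, abs_sub_comm x]
    exact this hy hx (le_of_not_ge hyx)
  have hsub : 0 ≤ x - y := sub_nonneg.2 hyx
  rw [abs_of_nonneg hsub, abs_of_nonneg (sub_nonneg.2 (Real.rpow_le_rpow hy hyx hp)),
    sub_le_iff_le_add]
  simpa only [sub_add_cancel] using Real.rpow_add_le_add_rpow hsub hy hp hp'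

theorem holderOnWith_rpow_const_Ici {p : ℝ≥0} (hp : p ≤ 1) :
    HolderOnWith 1 p (fun x : ℝ ↦ x ^ (p : ℝ)) (Ici 0) := fun x hx y hy ↦ by
  rw [edist_dist, edist_dist, ENNReal.coe_one, one_mul,
    ENNReal.ofReal_rpow_of_nonneg dist_nonneg p.coe_nonneg]
  exact ENNReal.ofReal_le_ofReal (abs_rpow_sub_rpow_le p.coe_nonneg (mod_cast hp) hx hy)

variable {s : Set ℝ}

theorem exists_lipschitzOnWith_rpow_const {p : ℝ} (hp : 1 ≤ p) (hs : IsCompact s) :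
    ∃ K, LipschitzOnWith K (fun x : ℝ ↦ x ^ p) s :=
  have hsmooth : ContDiff ℝ 1 fun x : ℝ ↦ x ^ p :=
    mod_cast Real.contDiff_rpow_const_of_le (n := 1) (mod_cast hp)
  hsmooth.locallyLipschitz.locallyLipschitzOn.exists_lipschitzOnWith_of_compact hs

theorem exists_holderOnWith_rpow_const (p : ℝ≥0) (hs : IsCompact s) (hs₀ : s ⊆ Ici 0) :
    ∃ K, HolderOnWith K (min p 1) (fun x : ℝ ↦ x ^ (p : ℝ)) s := by
  rcases le_total p 1 with hp | hp
  · rw [min_eq_left hp]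
    exact ⟨1, (holderOnWith_rpow_const_Ici hp).mono hs₀⟩
  · rw [min_eq_right hp]
    exact (exists_lipschitzOnWith_rpow_const (mod_cast hp) hs).imp fun _ ↦ holderOnWith_one.2

theorem exists_holderOnWith_max_zero_rpow (p : ℝ≥0) (hs : IsCompact s) :
    ∃ K, HolderOnWith K (min p 1) (fun x : ℝ ↦ max x 0 ^ (p : ℝ)) s := by
  have hlip : LipschitzWith 1 fun x : ℝ ↦ max x 0 := LipschitzWith.id.max_const 0
  obtain ⟨K, hK⟩ := exists_holderOnWith_rpow_const p (hs.image hlip.continuous)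
    (image_subset_iff.2 fun x _ ↦ le_max_right x 0)
  refine ⟨K, ?_⟩
  simpa only [Function.comp_def, NNReal.one_rpow, mul_one] using
    hK.comp (holderOnWith_one.2 hlip.lipschitzOnWith) (mapsTo_image _ _)

theorem hasDerivAt_max_zero_rpow {p : ℝ} (hp : 1 < p) (x : ℝ) :
    HasDerivAt (fun u : ℝ ↦ max u 0 ^ p) (p * max x 0 ^ (p - 1)) x := by
  have hcont {q : ℝ} (hq : 0 ≤ q) : Continuous fun u : ℝ ↦ max u 0 ^ q :=
    (continuous_id.max continuous_const).rpow_const fun _ ↦ Or.inr hq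
  have hne (u : ℝ) (hu : u ≠ 0) :
      HasDerivAt (fun u : ℝ ↦ max u 0 ^ p) (p * max u 0 ^ (p - 1)) u := by
    rcases hu.lt_or_gt with hneg | hpos
    · rw [max_eq_right hneg.le, Real.zero_rpow (sub_pos.2 hp).ne', mul_zero]
      refine (hasDerivAt_const u 0).congr_of_eventuallyEq ?_
      filter_upwards [Iio_mem_nhds hneg] with v hv
      rw [max_eq_right (mem_Iio.1 hv).le, Real.zero_rpow (zero_lt_one.trans hp).ne']
    · rw [max_eq_left hpos.le]
      refine (Real.hasDerivAt_rpow_const (Or.inl hu)).congr_of_eventuallyEq ?_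
      filter_upwards [Ioi_mem_nhds hpos] with v hv
      rw [max_eq_left (mem_Ioi.1 hv).le]
  exact hasDerivAt_of_hasDerivAt_of_ne' hne (hcont (zero_le_one.trans hp.le)).continuousAt
    (continuous_const.mul (hcont (sub_nonneg.2 hp.le))).continuousAt x

theorem exists_abs_max_zero_rpow_taylor_le {p : ℝ} (hp : 1 < p) (hs : Bornology.IsBounded s) :
    ∃ C : ℝ≥0, ∀ x ∈ s, ∀ y ∈ s,
      |max y 0 ^ p - max x 0 ^ p - p * max x 0 ^ (p - 1) * (y - x)| ≤ C * |y - x| ^ min p 2 := by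
  obtain ⟨R, hR⟩ := hs.subset_closedBall 0
  lift p - 1 to ℝ≥0 using (sub_pos.2 hp).le with q hq
  obtain ⟨K, hK⟩ := exists_holderOnWith_max_zero_rpow q (isCompact_closedBall (0 : ℝ) R)
  have hderiv (u : ℝ) : HasDerivAt (fun u : ℝ ↦ max u 0 ^ p) (p * max u 0 ^ (q : ℝ)) u :=
    hq ▸ hasDerivAt_max_zero_rpow hp u
  have hexp : ((min q 1 : ℝ≥0) : ℝ) + 1 = min p 2 := by
    rw [NNReal.coe_min, NNReal.coe_one, hq, ← min_add_add_right, sub_add_cancel, one_add_one_eq_two]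
  refine ⟨K * ‖p‖₊, fun x hx y hy ↦ ?_⟩
  have htaylor := norm_image_sub_le_of_holderOnWith_hasDerivWithinAt (convex_closedBall 0 R)
    (fun u _ ↦ (hderiv u).hasDerivWithinAt) (holderOnWith_const_smul p hK) (hR hx) (hR hy)
  simpa only [hexp, Real.norm_eq_abs, smul_eq_mul, mul_comm (y - x)] using htaylor

end Rpow

/-- **Pointwise Taylor estimate for the positive-part power.**
For `ν > 1` and `g u = (max u 0)^ν` (real power, with `0^{ν−1} = 0`), for every `a₀ > 0`
there is `C ≥ 0` depending only on `ν, a₀` such that for all `|a| ≤ a₀`, `|h| ≤ a₀`,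
`|g (a+h) − g a − ν (max a 0)^{ν−1} h| ≤ C |h|^{min ν 2}`. -/
theorem stmt_14 (ν : ℝ) (hν : 1 < ν) (a₀ : ℝ) (ha₀ : 0 < a₀) :
    ∃ C : ℝ, 0 ≤ C ∧ ∀ a h : ℝ, |a| ≤ a₀ → |h| ≤ a₀ →
      |(max (a + h) 0) ^ ν - (max a 0) ^ ν - ν * (max a 0) ^ (ν - 1) * h|
        ≤ C * |h| ^ (min ν 2) := by
  obtain ⟨C, hC⟩ := exists_abs_max_zero_rpow_taylor_le hν
    (Metric.isBounded_closedBall (x := (0 : ℝ)) (r := a₀ + a₀))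
  refine ⟨C, C.coe_nonneg, fun a h ha hh ↦ ?_⟩
  have ha_mem : a ∈ Metric.closedBall 0 (a₀ + a₀) :=
    mem_closedBall_zero_iff.2 (ha.trans (le_add_of_nonneg_right ha₀.le))
  have hah_mem : a + h ∈ Metric.closedBall 0 (a₀ + a₀) :=
    mem_closedBall_zero_iff.2 (norm_add_le_of_le ha hh)
  simpa only [add_sub_cancel_left] using hC a ha_mem (a + h) hah_mem
end

section
/- (Differential identity (N.7).) Let O ⊆ ℝ² be open with coordinates (ϖ,z) and write ∂₁ = ∂/∂ϖ, ∂₃ = ∂/∂z. Let f, k, l : O → ℝ be C² with f·l + k² > 0 on O, set Π := √(f·l + k²) and Σ := ∂₁f·∂₁l + ∂₃f·∂₃l + (∂₁k)² + (∂₃k)². Then on O: (1/2)·[ l·(∂₁(∂₁f/Π) + ∂₃(∂₃f/Π) + f·Σ/Π³) + 2k·(∂₁(∂₁k/Π) + ∂₃(∂₃k/Π) + k·Σ/Π³) + f·(∂₁(∂₁l/Π) + ∂₃(∂₃l/Π) + l·Σ/Π³) ] = ∂₁²Π + ∂₃²Π. -/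
open Real

/-!
`f l + k²` is the quadratic form of a symmetric bilinear form `B` evaluated at `u = (f, k, l)`, so
`Π = √(B u u)` satisfies `∂Π = B(u, ∂u / Π)` in every direction. Differentiating once more,
`∂²Π = B(u, ∂(∂u / Π)) + B(∂u, ∂u) / Π`. Summed over the directions, the last term becomes `Σ / Π`,
which is `B(u, (Σ / Π³) u)` because `B u u = Π²`.
-/

open Filter Topology

section FormLength

variable {E V : Type*} [NormedAddCommGroup E] [NormedSpace ℝ E]
  [NormedAddCommGroup V] [NormedSpace ℝ V] {B : V →L[ℝ] V →L[ℝ] ℝ}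

/-- The length `√(B x x)` of a vector with respect to a bilinear form, which may be indefinite;
where `B x x < 0` it takes the value `0`. -/
noncomputable def formLength (B : V →L[ℝ] V →L[ℝ] ℝ) (x : V) : ℝ := √(B x x)

theorem formLength_pos {x : V} (hx : 0 < B x x) : 0 < formLength B x :=
  Real.sqrt_pos.mpr hx

theorem sq_formLength {x : V} (hx : 0 ≤ B x x) : formLength B x ^ 2 = B x x :=
  Real.sq_sqrt hx

theorem hasFDerivAt_formLength (hB : ∀ x y, B x y = B y x) {x : V} (hx : 0 < B x x) :
    HasFDerivAt (formLength B) ((formLength B x)⁻¹ • B x) x := by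
  have hquad : HasFDerivAt (fun y => B y y) ((2 : ℝ) • B x) x := by
    refine (B.hasFDerivAt_of_bilinear (hasFDerivAt_id x) (hasFDerivAt_id x)).congr_fderiv ?_
    ext y
    simp [hB y x, two_mul]
  refine (hquad.sqrt hx.ne').congr_fderiv ?_
  rw [smul_smul, formLength]
  congr 1
  ring

theorem fderiv_formLength_comp (hB : ∀ x y, B x y = B y x) {u : E → V} {p : E}
    (hu : DifferentiableAt ℝ u p) (hpos : 0 < B (u p) (u p)) (v : E) :
    fderiv ℝ (fun q => formLength B (u q)) p v =
      B (u p) ((formLength B (u p))⁻¹ • fderiv ℝ u p v) := by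
  have hlen := hasFDerivAt_formLength hB hpos
  rw [fderiv_fun_comp p hlen.differentiableAt hu, hlen.fderiv]
  simp

theorem differentiableAt_inv_formLength_comp (hB : ∀ x y, B x y = B y x) {u : E → V} {p : E}
    (hu : DifferentiableAt ℝ u p) (hpos : 0 < B (u p) (u p)) :
    DifferentiableAt ℝ (fun q => (formLength B (u q))⁻¹) p :=
  ((hasFDerivAt_formLength hB hpos).differentiableAt.comp p hu).inv (formLength_pos hpos).ne'

theorem eventually_differentiableAt_of_contDiffAt_two {u : E → V} {p : E}
    (hu : ContDiffAt ℝ 2 u p) : ∀ᶠ q in 𝓝 p, DifferentiableAt ℝ u q :=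
  (hu.eventually (by simp)).mono fun _ hq => hq.differentiableAt two_ne_zero

theorem differentiableAt_smul_fderiv_apply {u : E → V} {p : E} (hu : ContDiffAt ℝ 2 u p)
    {s : E → ℝ} (hs : DifferentiableAt ℝ s p) (v : E) :
    DifferentiableAt ℝ (fun q => s q • fderiv ℝ u q v) p := by
  have hfderiv : ContDiffAt ℝ 1 (fderiv ℝ u) p := hu.fderiv_right (by norm_num)
  exact hs.smul ((hfderiv.differentiableAt one_ne_zero).clm_apply (differentiableAt_const v))

theorem fderiv_fderiv_formLength_comp (hB : ∀ x y, B x y = B y x) {u : E → V} {p : E}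
    (hu : ContDiffAt ℝ 2 u p) (hpos : 0 < B (u p) (u p)) (v w : E) :
    fderiv ℝ (fun q => fderiv ℝ (fun q => formLength B (u q)) q v) p w =
      B (u p) (fderiv ℝ (fun q => (formLength B (u q))⁻¹ • fderiv ℝ u q v) p w)
        + B (fderiv ℝ u p w) (fderiv ℝ u p v) / formLength B (u p) := by
  have hdiff : DifferentiableAt ℝ u p := hu.differentiableAt two_ne_zero
  have hpos_near : ∀ᶠ q in 𝓝 p, 0 < B (u q) (u q) :=
    ((B.continuous.continuousAt.comp hdiff.continuousAt).clm_apply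
      hdiff.continuousAt).eventually_const_lt hpos
  have hfirst : (fun q => fderiv ℝ (fun q => formLength B (u q)) q v) =ᶠ[𝓝 p]
      fun q => B (u q) ((formLength B (u q))⁻¹ • fderiv ℝ u q v) := by
    filter_upwards [eventually_differentiableAt_of_contDiffAt_two hu, hpos_near] with q hq hqpos
    exact fderiv_formLength_comp hB hq hqpos v
  have hscaled := differentiableAt_smul_fderiv_apply hu
    (differentiableAt_inv_formLength_comp hB hdiff hpos) v
  rw [hfirst.fderiv_eq,
    (B.hasFDerivAt_of_bilinear hdiff.hasFDerivAt hscaled.hasFDerivAt).fderiv]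
  simp [div_eq_inv_mul]

theorem sum_fderiv_fderiv_formLength_comp (hB : ∀ x y, B x y = B y x) {u : E → V} {p : E}
    (hu : ContDiffAt ℝ 2 u p) (hpos : 0 < B (u p) (u p)) {ι : Type*} [Fintype ι] (v : ι → E) :
    ∑ i, fderiv ℝ (fun q => fderiv ℝ (fun q => formLength B (u q)) q (v i)) p (v i) =
      B (u p) (∑ i, fderiv ℝ (fun q => (formLength B (u q))⁻¹ • fderiv ℝ u q (v i)) p (v i)
        + ((∑ i, B (fderiv ℝ u p (v i)) (fderiv ℝ u p (v i))) / formLength B (u p) ^ 3) • u p) := by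
  have hlen := (formLength_pos hpos).ne'
  simp only [fderiv_fderiv_formLength_comp hB hu hpos, Finset.sum_add_distrib, ← Finset.sum_div,
    map_add, map_sum, map_smul, smul_eq_mul, ← sq_formLength hpos.le]
  field_simp

theorem map_fderiv_smul_fderiv {W : Type*} [NormedAddCommGroup W] [NormedSpace ℝ W]
    (φ : V →L[ℝ] W) {u : E → V} {p : E} (hu : ContDiffAt ℝ 2 u p)
    {s : E → ℝ} (hs : DifferentiableAt ℝ s p) (v w : E) :
    φ (fderiv ℝ (fun q => s q • fderiv ℝ u q v) p w) =
      fderiv ℝ (fun q => s q • fderiv ℝ (fun q => φ (u q)) q v) p w := by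
  have hcomm : (fun q => s q • fderiv ℝ (fun q => φ (u q)) q v) =ᶠ[𝓝 p]
      fun q => φ (s q • fderiv ℝ u q v) := by
    filter_upwards [eventually_differentiableAt_of_contDiffAt_two hu] with q hq
    rw [fderiv_fun_comp q φ.differentiableAt hq, φ.fderiv]
    simp
  rw [hcomm.fderiv_eq, fderiv_fun_comp p φ.differentiableAt
    (differentiableAt_smul_fderiv_apply hu hs v), φ.fderiv]
  rfl

end FormLength

section LewisForm

open ContinuousLinearMap in
/-- The symmetric bilinear form on triples `(f, k, l)` whose quadratic form is `f l + k²`, minus the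
determinant of the block `f (c dt)² - 2 k c dt dφ - l dφ²` of the Lewis metric. -/
noncomputable def lewisForm : ℝ × ℝ × ℝ →L[ℝ] ℝ × ℝ × ℝ →L[ℝ] ℝ :=
  letI f := fst ℝ ℝ (ℝ × ℝ)
  letI k := (fst ℝ ℝ ℝ).comp (snd ℝ ℝ (ℝ × ℝ))
  letI l := (snd ℝ ℝ ℝ).comp (snd ℝ ℝ (ℝ × ℝ))
  (1 / 2 : ℝ) • ((mul ℝ ℝ).bilinearComp l f + (2 : ℝ) • (mul ℝ ℝ).bilinearComp k k
    + (mul ℝ ℝ).bilinearComp f l)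

theorem lewisForm_apply (x y : ℝ × ℝ × ℝ) :
    lewisForm x y = 1 / 2 * (x.2.2 * y.1 + 2 * x.2.1 * y.2.1 + x.1 * y.2.2) := by
  simp only [lewisForm, add_apply, smul_apply, ContinuousLinearMap.bilinearComp_apply,
    ContinuousLinearMap.comp_apply, ContinuousLinearMap.coe_fst', ContinuousLinearMap.coe_snd',
    ContinuousLinearMap.mul_apply', smul_eq_mul]
  ring

theorem lewisForm_comm (x y : ℝ × ℝ × ℝ) : lewisForm x y = lewisForm y x := by
  simp only [lewisForm_apply]
  ring

theorem lewisForm_self (x : ℝ × ℝ × ℝ) : lewisForm x x = x.1 * x.2.2 + x.2.1 ^ 2 := by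
  rw [lewisForm_apply]
  ring

end LewisForm

theorem stmt_18_general {E ι : Type*} [NormedAddCommGroup E] [NormedSpace ℝ E] [Fintype ι]
    (v : ι → E) {f k l P : E → ℝ} {p : E} {S : ℝ}
    (hf : ContDiffAt ℝ 2 f p) (hk : ContDiffAt ℝ 2 k p) (hl : ContDiffAt ℝ 2 l p)
    (hpos : 0 < f p * l p + k p ^ 2) (hP : P = fun q => √(f q * l q + k q ^ 2))
    (hS : S = ∑ i, fderiv ℝ f p (v i) * fderiv ℝ l p (v i) + ∑ i, fderiv ℝ k p (v i) ^ 2) :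
    1 / 2 *
        (l p * (∑ i, fderiv ℝ (fun q => fderiv ℝ f q (v i) / P q) p (v i) + f p * S / P p ^ 3)
        + 2 * k p * (∑ i, fderiv ℝ (fun q => fderiv ℝ k q (v i) / P q) p (v i) + k p * S / P p ^ 3)
        + f p * (∑ i, fderiv ℝ (fun q => fderiv ℝ l q (v i) / P q) p (v i) + l p * S / P p ^ 3)) =
      ∑ i, fderiv ℝ (fun q => fderiv ℝ P q (v i)) p (v i) := by
  let u : E → ℝ × ℝ × ℝ := fun q => (f q, k q, l q)
  have hu : ContDiffAt ℝ 2 u p := hf.prodMk (hk.prodMk hl)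
  have hdf := hf.differentiableAt two_ne_zero
  have hdk := hk.differentiableAt two_ne_zero
  have hdl := hl.differentiableAt two_ne_zero
  have hu_pos : 0 < lewisForm (u p) (u p) := by rwa [lewisForm_self]
  have hP_length (q : E) : formLength lewisForm (u q) = P q := by
    rw [hP, formLength, lewisForm_self]
  have hS_form : ∑ i, lewisForm (fderiv ℝ u p (v i)) (fderiv ℝ u p (v i)) = S := by
    simp only [hS, u, lewisForm_self, hdf.fderiv_prodMk (hdk.prodMk hdl), hdk.fderiv_prodMk hdl,
      ContinuousLinearMap.prod_apply, Finset.sum_add_distrib]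
  have hinv : DifferentiableAt ℝ (fun q => (P q)⁻¹) p := by
    simpa only [hP_length] using differentiableAt_inv_formLength_comp lewisForm_comm
      (hu.differentiableAt two_ne_zero) hu_pos
  let D (g : E → ℝ) : ℝ := ∑ i, fderiv ℝ (fun q => fderiv ℝ g q (v i) / P q) p (v i)
  have hcoord (φ : ℝ × ℝ × ℝ →L[ℝ] ℝ) :
      φ (∑ i, fderiv ℝ (fun q => (P q)⁻¹ • fderiv ℝ u q (v i)) p (v i) + (S / P p ^ 3) • u p) =
        D (fun q => φ (u q)) + φ (u p) * S / P p ^ 3 := by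
    simp only [D, map_add, map_sum, map_smul, map_fderiv_smul_fderiv φ hu hinv, smul_eq_mul,
      div_eq_inv_mul]
    ring
  have hvector : ∑ i, fderiv ℝ (fun q => (P q)⁻¹ • fderiv ℝ u q (v i)) p (v i)
        + (S / P p ^ 3) • u p =
      (D f + f p * S / P p ^ 3, D k + k p * S / P p ^ 3, D l + l p * S / P p ^ 3) :=
    Prod.ext (hcoord (.fst ℝ ℝ (ℝ × ℝ))) <| Prod.ext
      (hcoord ((ContinuousLinearMap.fst ℝ ℝ ℝ).comp (.snd ℝ ℝ (ℝ × ℝ))))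
      (hcoord ((ContinuousLinearMap.snd ℝ ℝ ℝ).comp (.snd ℝ ℝ (ℝ × ℝ))))
  have hsum := sum_fderiv_fderiv_formLength_comp lewisForm_comm hu hu_pos v
  simp only [hP_length, hS_form] at hsum
  rw [hvector, lewisForm_apply] at hsum
  exact hsum.symm

/-- **Differential identity (N.7).**
Let `O ⊆ ℝ²` be open, `f, k, l : O → ℝ` of class `C²` with `f·l + k² > 0`,
`Pt := √(f·l + k²)` and `Sg := ∂₁f·∂₁l + ∂₃f·∂₃l + (∂₁k)² + (∂₃k)²`.  Then on `O`:
`(1/2)[ l·(∂₁(∂₁f/Pt) + ∂₃(∂₃f/Pt) + f·Sg/Pt³) + 2k·(∂₁(∂₁k/Pt) + ∂₃(∂₃k/Pt) + k·Sg/Pt³)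
 + f·(∂₁(∂₁l/Pt) + ∂₃(∂₃l/Pt) + l·Sg/Pt³) ] = ∂₁²Pt + ∂₃²Pt`. -/
theorem stmt_18
    (O : Set (ℝ × ℝ)) (hO : IsOpen O)
    (f k l : ℝ × ℝ → ℝ)
    (hf : ContDiffOn ℝ 2 f O) (hk : ContDiffOn ℝ 2 k O) (hl : ContDiffOn ℝ 2 l O)
    (hpos : ∀ p ∈ O, 0 < f p * l p + k p ^ 2)
    (Pt Sg : ℝ × ℝ → ℝ)
    (hPt : Pt = fun p => Real.sqrt (f p * l p + k p ^ 2))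
    (hSg : Sg = fun p => d1 f p * d1 l p + d3 f p * d3 l p + (d1 k p) ^ 2 + (d3 k p) ^ 2) :
    ∀ p ∈ O,
      (1/2) * ( l p * (d1 (fun q => d1 f q / Pt q) p + d3 (fun q => d3 f q / Pt q) p
                        + f p * Sg p / Pt p ^ 3)
              + 2 * k p * (d1 (fun q => d1 k q / Pt q) p + d3 (fun q => d3 k q / Pt q) p
                        + k p * Sg p / Pt p ^ 3)
              + f p * (d1 (fun q => d1 l q / Pt q) p + d3 (fun q => d3 l q / Pt q) p
                        + l p * Sg p / Pt p ^ 3) )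
        = d1 (d1 Pt) p + d3 (d3 Pt) p := by
  intro p hp
  have hOp := hO.mem_nhds hp
  unfold d1 d3 at hSg ⊢
  simpa [hSg, add_assoc] using stmt_18_general ![((1 : ℝ), (0 : ℝ)), (0, 1)]
    (hf.contDiffAt hOp) (hk.contDiffAt hOp) (hl.contDiffAt hOp) (hpos p hp) hPt rfl
end
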